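/- Let $T$ and $S$ be commuting invertible measure preserving transformations of a probability space $(X,\mathcal{X},\mu)$, both ergodic. Then for every $l\geq 1$ and all $f_1,\dots,f_l\in L^\infty(\mu)$, $\lim_{N\to\infty}\frac{1}{N}\sum_{n=0}^{N-1} f_1(T^n x)\cdots f_l(T^{ln}x) = \lim_{N\to\infty}\frac{1}{N}\sum_{n=0}^{N-1} f_1(S^n x)\cdots f_l(S^{ln}x)$ in $L^2(\mu)$. -/

import Mathlib

open MeasureTheory Filter Finset

/-- The spaces `X^{[k]} = X^{2^k}`, realized as iterated squares. -/
def HKBox (X : Type*) : ℕ → Type _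
  | 0 => X
  | (k+1) => HKBox X k × HKBox X k

def HKBox.instMS (X : Type*) [m : MeasurableSpace X] : ∀ k, MeasurableSpace (HKBox X k)
  | 0 => m
  | (k+1) => @Prod.instMeasurableSpace _ _ (HKBox.instMS X k) (HKBox.instMS X k)

instance (X : Type*) [MeasurableSpace X] (k : ℕ) : MeasurableSpace (HKBox X k) :=
  HKBox.instMS X k

/-- The diagonal transformation `T^{[k]} = T × ⋯ × T` on `X^{[k]}`. -/
def HKBox.map {X : Type*} (T : X → X) : ∀ k, HKBox X k → HKBox X k
  | 0 => T
  | (k+1) => fun p => (HKBox.map T k p.1, HKBox.map T k p.2)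

/-- The σ-algebra of invariant sets of a transformation. -/
def invSigma {α : Type*} [m : MeasurableSpace α] (f : α → α) : MeasurableSpace α where
  MeasurableSet' s := MeasurableSet s ∧ f ⁻¹' s = s
  measurableSet_empty := ⟨MeasurableSet.empty, rfl⟩
  measurableSet_compl := fun s hs => ⟨hs.1.compl, by rw [Set.preimage_compl, hs.2]⟩
  measurableSet_iUnion := fun s hs => ⟨MeasurableSet.iUnion fun i => (hs i).1, by
    rw [Set.preimage_iUnion]; exact Set.iUnion_congr fun i => (hs i).2⟩

/-- The product of `f` over all `2^k` coordinates of `X^{[k]}`. -/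
def HKBox.prodFun {X : Type*} (f : X → ℝ) : ∀ k, HKBox X k → ℝ
  | 0 => f
  | (k+1) => fun p => HKBox.prodFun f k p.1 * HKBox.prodFun f k p.2

/-- `IsHKSeq μ T ν` asserts that `ν k` is the Host–Kra box measure `μ^{[k]}` of the
system `(X, μ, T)`: `ν 0 = μ` and `ν (k+1)` is the relatively independent square of
`ν k` over the σ-algebra of `T^{[k]}`-invariant sets. -/
def IsHKSeq {X : Type*} [MeasurableSpace X] (μ : Measure X) (T : X → X)
    (ν : ∀ k, Measure (HKBox X k)) : Prop :=
  ν 0 = μ ∧ ∀ k, (∀ F' F'' : HKBox X k → ℝ, Measurable F' → Measurable F'' →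
    (∃ C, ∀ x, |F' x| ≤ C) → (∃ C, ∀ x, |F'' x| ≤ C) →
    ∫ p, F' p.1 * F'' p.2 ∂(ν (k+1)) =
      ∫ x, ((ν k)[F' | invSigma (HKBox.map T k)]) x *
        ((ν k)[F'' | invSigma (HKBox.map T k)]) x ∂(ν k))

/-- The `k`-th Host–Kra seminorm of `f`, computed from a sequence `ν` of box measures:
`⦀f⦀_k = (∫ ∏_{ε} f(x_ε) dν k)^{1/2^k}`. -/
noncomputable def HKseminorm {X : Type*} [MeasurableSpace X]
    (ν : ∀ k, Measure (HKBox X k)) (k : ℕ) (f : X → ℝ) : ℝ :=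
  (∫ x, HKBox.prodFun f k x ∂(ν k)) ^ (((2 : ℝ) ^ k)⁻¹)

set_option linter.unusedSectionVars false
set_option linter.unusedSimpArgs false

namespace HKP

/-- bounded measurable -/
structure BM {Y : Type*} [MeasurableSpace Y] (f : Y → ℝ) : Prop where
  meas : Measurable f
  bdd : ∃ C, ∀ x, |f x| ≤ C

namespace BM
variable {Y Z : Type*} [MeasurableSpace Y] [MeasurableSpace Z] {f g : Y → ℝ}

lemma bdd' (hf : BM f) : ∃ C, 0 < C ∧ ∀ x, |f x| ≤ C := by
  obtain ⟨C, hC⟩ := hf.bdd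
  exact ⟨max C 1, by positivity, fun x => (hC x).trans (le_max_left _ _)⟩

lemma const (c : ℝ) : BM (fun _ : Y => c) := ⟨measurable_const, |c|, fun _ => le_rfl⟩

lemma add (hf : BM f) (hg : BM g) : BM (fun x => f x + g x) := by
  obtain ⟨C, hC⟩ := hf.bdd
  obtain ⟨D, hD⟩ := hg.bdd
  exact ⟨hf.meas.add hg.meas, C + D, fun x => (abs_add_le _ _).trans (add_le_add (hC x) (hD x))⟩

lemma neg (hf : BM f) : BM (fun x => - f x) := by
  obtain ⟨C, hC⟩ := hf.bdd
  exact ⟨hf.meas.neg, C, fun x => by rw [abs_neg]; exact hC x⟩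

lemma sub (hf : BM f) (hg : BM g) : BM (fun x => f x - g x) := by
  simpa [sub_eq_add_neg] using hf.add hg.neg

lemma mul (hf : BM f) (hg : BM g) : BM (fun x => f x * g x) := by
  obtain ⟨C, hC0, hC⟩ := hf.bdd'
  obtain ⟨D, hD0, hD⟩ := hg.bdd'
  refine ⟨hf.meas.mul hg.meas, C * D, fun x => ?_⟩
  rw [abs_mul]
  exact mul_le_mul (hC x) (hD x) (abs_nonneg _) hC0.le

lemma comp (hf : BM f) {φ : Z → Y} (hφ : Measurable φ) : BM (fun z => f (φ z)) := by
  obtain ⟨C, hC⟩ := hf.bdd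
  exact ⟨hf.meas.comp hφ, C, fun x => hC _⟩

lemma sum {ι : Type*} (s : Finset ι) {F : ι → Y → ℝ} (hF : ∀ i ∈ s, BM (F i)) :
    BM (fun x => ∑ i ∈ s, F i x) := by
  classical
  induction s using Finset.induction_on with
  | empty => simpa using BM.const 0
  | insert a s ha ih =>
    simp only [Finset.sum_insert ha]
    exact (hF a (by simp)).add (ih fun i hi => hF i (by simp [hi]))

lemma prod {ι : Type*} (s : Finset ι) {F : ι → Y → ℝ} (hF : ∀ i ∈ s, BM (F i)) :
    BM (fun x => ∏ i ∈ s, F i x) := by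
  classical
  induction s using Finset.induction_on with
  | empty => simpa using BM.const 1
  | insert a s ha ih =>
    simp only [Finset.prod_insert ha]
    exact (hF a (by simp)).mul (ih fun i hi => hF i (by simp [hi]))

lemma memLp (hf : BM f) (μ : Measure Y) [IsFiniteMeasure μ] (p : ENNReal) : MemLp f p μ := by
  obtain ⟨C, hC⟩ := hf.bdd
  exact MemLp.of_bound hf.meas.aestronglyMeasurable C (Eventually.of_forall hC)

lemma integrable (hf : BM f) (μ : Measure Y) [IsFiniteMeasure μ] : Integrable f μ :=
  memLp_one_iff_integrable.1 (hf.memLp μ 1)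

end BM

section nrm
variable {Y Z : Type*} [MeasurableSpace Y] [MeasurableSpace Z] {f g h : Y → ℝ}
  {μ : Measure Y} [IsProbabilityMeasure μ] {ν : Measure Z} [IsProbabilityMeasure ν]

/-- L2 seminorm -/
noncomputable def nrm (μ : Measure Y) (f : Y → ℝ) : ℝ := √ (∫ x, f x ^ 2 ∂μ)

lemma nrm_nonneg {μ : Measure Y} {f : Y → ℝ} : 0 ≤ nrm μ f := Real.sqrt_nonneg _

lemma nrm_sq {μ : Measure Y} {f : Y → ℝ} : nrm μ f ^ 2 = ∫ x, f x ^ 2 ∂μ :=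
  Real.sq_sqrt (integral_nonneg fun _ => sq_nonneg _)

lemma nrm_sq' {μ : Measure Y} {f : Y → ℝ} : nrm μ f ^ 2 = ∫ x, f x * f x ∂μ := by
  rw [nrm_sq]; simp only [sq]

lemma nrm_congr {μ : Measure Y} {f g : Y → ℝ} (h : f =ᵐ[μ] g) : nrm μ f = nrm μ g := by
  unfold nrm
  congr 1
  apply integral_congr_ae
  filter_upwards [h] with x hx
  rw [hx]

lemma nrm_eq_norm (hf : MemLp f 2 μ) : nrm μ f = ‖hf.toLp f‖ := by
  rw [← Real.sqrt_sq (norm_nonneg (hf.toLp f)), ← real_inner_self_eq_norm_sq, L2.inner_def, nrm]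
  congr 1
  apply integral_congr_ae
  filter_upwards [hf.coeFn_toLp] with x hx
  rw [hx]; simp [sq]

lemma nrm_eq_eLpNorm (hf : MemLp f 2 μ) : nrm μ f = (eLpNorm f 2 μ).toReal := by
  rw [nrm_eq_norm hf, Lp.norm_toLp]

lemma integral_mul_eq_inner (hf : MemLp f 2 μ) (hg : MemLp g 2 μ) :
    ∫ x, f x * g x ∂μ = inner ℝ (hf.toLp f) (hg.toLp g) := by
  rw [L2.inner_def]
  apply integral_congr_ae
  filter_upwards [hf.coeFn_toLp, hg.coeFn_toLp] with x hx hy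
  rw [hx, hy]; simp [mul_comm]

lemma abs_integral_mul_le (hf : BM f) (hg : BM g) :
    |∫ x, f x * g x ∂μ| ≤ nrm μ f * nrm μ g := by
  rw [integral_mul_eq_inner (hf.memLp μ 2) (hg.memLp μ 2), nrm_eq_norm (hf.memLp μ 2),
    nrm_eq_norm (hg.memLp μ 2)]
  exact abs_real_inner_le_norm _ _

lemma nrm_add_le (hf : BM f) (hg : BM g) :
    nrm μ (fun x => f x + g x) ≤ nrm μ f + nrm μ g := by
  rw [nrm_eq_norm (hf.memLp μ 2), nrm_eq_norm (hg.memLp μ 2), nrm_eq_norm ((hf.add hg).memLp μ 2)]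
  exact norm_add_le ((hf.memLp μ 2).toLp f) ((hg.memLp μ 2).toLp g)

lemma nrm_neg {μ : Measure Y} {f : Y → ℝ} : nrm μ (fun x => - f x) = nrm μ f := by
  simp [nrm]

lemma nrm_sub_le (hf : BM f) (hg : BM g) :
    nrm μ (fun x => f x - g x) ≤ nrm μ f + nrm μ g := by
  have := nrm_add_le (μ := μ) hf hg.neg
  rw [nrm_neg] at this
  simpa [sub_eq_add_neg] using this

lemma nrm_sub_comm {μ : Measure Y} {f g : Y → ℝ} :
    nrm μ (fun x => f x - g x) = nrm μ (fun x => g x - f x) := by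
  rw [← nrm_neg]; simp

lemma nrm_tri (hf : BM f) (hg : BM g) (hh : BM h) :
    nrm μ (fun x => f x - h x) ≤ nrm μ (fun x => f x - g x) + nrm μ (fun x => g x - h x) := by
  have := nrm_add_le (μ := μ) (hf.sub hg) (hg.sub hh)
  simpa using this

lemma nrm_smul {μ : Measure Y} (c : ℝ) {f : Y → ℝ} :
    nrm μ (fun x => c * f x) = |c| * nrm μ f := by
  simp only [nrm, mul_pow, integral_const_mul]
  rw [Real.sqrt_mul (sq_nonneg _), Real.sqrt_sq_eq_abs]

lemma nrm_zero {μ : Measure Y} : nrm μ (fun _ => (0:ℝ)) = 0 := by simp [nrm]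

lemma nrm_mono (hg : BM g) (h : ∀ x, |f x| ≤ |g x|) : nrm μ f ≤ nrm μ g := by
  unfold nrm
  apply Real.sqrt_le_sqrt
  apply integral_mono_of_nonneg (Eventually.of_forall fun _ => sq_nonneg _)
  · simpa [sq] using (hg.mul hg).integrable μ
  · exact Eventually.of_forall fun x => sq_le_sq.2 (h x)

lemma nrm_mul_le (hf : BM f) {C : ℝ} (hC : ∀ x, |g x| ≤ C) :
    nrm μ (fun x => g x * f x) ≤ C * nrm μ f := by
  by_cases hY : Nonempty Y
  · have hC0 : 0 ≤ C := (abs_nonneg _).trans (hC hY.some)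
    rw [← abs_of_nonneg hC0, ← nrm_smul]
    refine nrm_mono ((BM.const C).mul hf) fun x => ?_
    rw [abs_mul, abs_mul, abs_of_nonneg hC0]
    exact mul_le_mul_of_nonneg_right (hC x) (abs_nonneg _)
  · exact absurd (nonempty_of_isProbabilityMeasure μ) hY

lemma nrm_le_of_bound {C : ℝ} (hC : ∀ x, |f x| ≤ C) : nrm μ f ≤ C := by
  have := nrm_mul_le (μ := μ) (BM.const (1:ℝ)) hC
  simpa [nrm] using this

lemma abs_integral_le_nrm (hf : BM f) : |∫ x, f x ∂μ| ≤ nrm μ f := by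
  have := abs_integral_mul_le (μ := μ) hf (BM.const 1)
  simpa [nrm] using this

lemma nrm_comp {φ : Z → Y} (hφ : MeasurePreserving φ ν μ) (hf : BM f) :
    nrm ν (fun z => f (φ z)) = nrm μ f := by
  unfold nrm
  have := integral_map (μ := ν) (φ := φ) hφ.measurable.aemeasurable (f := fun x => f x ^ 2)
    (by rw [hφ.map_eq]; exact (hf.meas.pow_const 2).aestronglyMeasurable)
  rw [hφ.map_eq] at this
  rw [this]

lemma integral_comp_mp {φ : Z → Y} (hφ : MeasurePreserving φ ν μ) (hf : BM f) :
    ∫ z, f (φ z) ∂ν = ∫ x, f x ∂μ := by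
  have := integral_map (μ := ν) (φ := φ) hφ.measurable.aemeasurable (f := f)
    (by rw [hφ.map_eq]; exact hf.meas.aestronglyMeasurable)
  rw [hφ.map_eq] at this
  rw [this]

lemma ae_eq_zero_of_nrm (hf : BM f) (h : nrm μ f = 0) : f =ᵐ[μ] 0 := by
  have h2 : ∫ x, f x ^ 2 ∂μ = 0 := by rw [← nrm_sq, h]; simp
  rw [integral_eq_zero_iff_of_nonneg (fun _ => sq_nonneg _)
    (by simpa [sq] using (hf.mul hf).integrable μ)] at h2
  filter_upwards [h2] with x hx
  simpa using hx

lemma ae_eq_of_nrm (hf : BM f) (hg : BM g) (h : nrm μ (fun x => f x - g x) = 0) : f =ᵐ[μ] g := by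
  filter_upwards [ae_eq_zero_of_nrm (hf.sub hg) h] with x hx
  simpa [sub_eq_zero] using hx

lemma nrm_sum_le {ι : Type*} (s : Finset ι) {F : ι → Y → ℝ} (hF : ∀ i ∈ s, BM (F i)) :
    nrm μ (fun x => ∑ i ∈ s, F i x) ≤ ∑ i ∈ s, nrm μ (F i) := by
  classical
  induction s using Finset.induction_on with
  | empty => simp [nrm_zero]
  | insert a s ha ih =>
    simp only [Finset.sum_insert ha]
    refine (nrm_add_le (hF a (by simp)) (BM.sum s fun i hi => hF i (by simp [hi]))).trans ?_
    gcongr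
    exact ih fun i hi => hF i (by simp [hi])

/-- difference of integrals control -/
lemma abs_integral_mul_sub_le {f' : Y → ℝ} (hf : BM f) (hf' : BM f') (hg : BM g) :
    |(∫ x, f x * g x ∂μ) - ∫ x, f' x * g x ∂μ| ≤ nrm μ (fun x => f x - f' x) * nrm μ g := by
  rw [← integral_sub ((hf.mul hg).integrable μ) ((hf'.mul hg).integrable μ)]
  have := abs_integral_mul_le (μ := μ) (hf.sub hf') hg
  simpa [sub_mul] using this

lemma abs_integral_sub_le {f' : Y → ℝ} (hf : BM f) (hf' : BM f') :
    |(∫ x, f x ∂μ) - ∫ x, f' x ∂μ| ≤ nrm μ (fun x => f x - f' x) := by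
  rw [← integral_sub (hf.integrable μ) (hf'.integrable μ)]
  exact abs_integral_le_nrm (hf.sub hf')

end nrm

section avg

/-- averages -/
noncomputable def avg (N : ℕ) (u : ℕ → ℝ) : ℝ := (N : ℝ)⁻¹ * ∑ n ∈ range N, u n

lemma avg_add (N : ℕ) (u v : ℕ → ℝ) : avg N (fun n => u n + v n) = avg N u + avg N v := by
  simp [avg, Finset.sum_add_distrib, mul_add]

lemma avg_sub (N : ℕ) (u v : ℕ → ℝ) : avg N (fun n => u n - v n) = avg N u - avg N v := by
  simp [avg, Finset.sum_sub_distrib, mul_sub]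

lemma avg_mul_left (N : ℕ) (c : ℝ) (u : ℕ → ℝ) : avg N (fun n => c * u n) = c * avg N u := by
  simp only [avg, ← Finset.mul_sum]; ring

lemma avg_mul_right (N : ℕ) (c : ℝ) (u : ℕ → ℝ) : avg N (fun n => u n * c) = avg N u * c := by
  simp only [avg, ← Finset.sum_mul]; ring

lemma avg_const {N : ℕ} (hN : 0 < N) (c : ℝ) : avg N (fun _ => c) = c := by
  have : (N : ℝ) ≠ 0 := by positivity
  simp [avg]; field_simp

lemma avg_mono (N : ℕ) {u v : ℕ → ℝ} (h : ∀ n, u n ≤ v n) : avg N u ≤ avg N v := by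
  unfold avg; gcongr; exact h _

lemma avg_nonneg (N : ℕ) {u : ℕ → ℝ} (h : ∀ n, 0 ≤ u n) : 0 ≤ avg N u := by
  unfold avg
  exact mul_nonneg (by positivity) (Finset.sum_nonneg fun i _ => h i)

lemma avg_le_const (N : ℕ) {u : ℕ → ℝ} {c : ℝ} (hc : 0 ≤ c) (h : ∀ n, u n ≤ c) :
    avg N u ≤ c := by
  rcases Nat.eq_zero_or_pos N with rfl | hN
  · simpa [avg] using hc
  · exact (avg_mono N h).trans (avg_const hN c).le

lemma abs_avg_le (N : ℕ) (u : ℕ → ℝ) : |avg N u| ≤ avg N (fun n => |u n|) := by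
  unfold avg
  rw [abs_mul, abs_of_nonneg (by positivity : (0:ℝ) ≤ (N : ℝ)⁻¹)]
  gcongr
  exact Finset.abs_sum_le_sum_abs _ _

lemma abs_avg_le_const (N : ℕ) {u : ℕ → ℝ} {c : ℝ} (hc : 0 ≤ c) (h : ∀ n, |u n| ≤ c) :
    |avg N u| ≤ c := (abs_avg_le N u).trans (avg_le_const N hc h)

lemma avg_comm (N M : ℕ) (u : ℕ → ℕ → ℝ) :
    avg N (fun n => avg M (fun m => u n m)) = avg M (fun m => avg N (fun n => u n m)) := by
  simp only [avg, Finset.mul_sum]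
  rw [Finset.sum_comm]
  refine Finset.sum_congr rfl fun i _ => Finset.sum_congr rfl fun j _ => by ring

lemma avg_congr (N : ℕ) {u v : ℕ → ℝ} (h : ∀ n, u n = v n) : avg N u = avg N v := by
  rw [funext h]

variable {Y : Type*} [MeasurableSpace Y] {μ : Measure Y} [IsProbabilityMeasure μ]

lemma BM.avg (N : ℕ) {F : ℕ → Y → ℝ} (hF : ∀ n, BM (F n)) :
    BM (fun x => avg N (fun n => F n x)) :=
  (BM.const _).mul (BM.sum _ fun i _ => hF i)

lemma nrm_avg_le (N : ℕ) {F : ℕ → Y → ℝ} (hF : ∀ n, BM (F n)) :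
    nrm μ (fun x => HKP.avg N (fun n => F n x)) ≤ HKP.avg N (fun n => nrm μ (F n)) := by
  unfold HKP.avg
  rw [nrm_smul, abs_of_nonneg (by positivity : (0:ℝ) ≤ (N : ℝ)⁻¹)]
  gcongr
  exact nrm_sum_le _ fun i _ => hF i

lemma integral_avg (N : ℕ) {F : ℕ → Y → ℝ} (hF : ∀ n, BM (F n)) :
    ∫ x, HKP.avg N (fun n => F n x) ∂μ = HKP.avg N (fun n => ∫ x, F n x ∂μ) := by
  unfold HKP.avg
  rw [integral_const_mul, integral_finsetSum _ fun i _ => (hF i).integrable μ]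

end avg

end HKP

namespace HKP
open ProbabilityTheory

section EI
variable {Y : Type*} [mY : MeasurableSpace Y] [StandardBorelSpace Y]
  (μ : Measure Y) [IsProbabilityMeasure μ] (T : Y → Y)

/-- conditional measures on the invariant σ-algebra -/
noncomputable def ker : Kernel Y Y :=
  (condExpKernel μ (MeasurableSpace.invariants T)).comap id
    (measurable_id'' (MeasurableSpace.invariants_le T))

instance : IsMarkovKernel (ker μ T) := by unfold ker; infer_instance

/-- conditional expectation on the invariant σ-algebra -/
noncomputable def EI (f : Y → ℝ) (y : Y) : ℝ := ∫ z, f z ∂(ker μ T y)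

variable {μ T}

lemma ker_apply (y : Y) : ker μ T y = condExpKernel μ (MeasurableSpace.invariants T) y := rfl

lemma EI_smeas {f : Y → ℝ} (hf : Measurable f) :
    StronglyMeasurable[MeasurableSpace.invariants T] (EI μ T f) := by
  unfold EI
  simp only [ker_apply]
  exact (StronglyMeasurable.integral_condExpKernel' (μ := μ)
    (m := MeasurableSpace.invariants T) hf.stronglyMeasurable).mono inf_le_left

lemma ker_inv (y : Y) : ker μ T (T y) = ker μ T y := by
  ext s hs
  simp only [ker_apply]
  have := measurable_condExpKernel (μ := μ) (m := MeasurableSpace.invariants T) hs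
  exact congrFun (MeasurableSpace.comp_eq_of_measurable_invariants this) y

lemma EI_inv {f : Y → ℝ} (y : Y) : EI μ T f (T y) = EI μ T f y := by
  unfold EI; rw [ker_inv]

lemma EI_inv_iter {f : Y → ℝ} (n : ℕ) (y : Y) : EI μ T f (T^[n] y) = EI μ T f y := by
  induction n with
  | zero => rfl
  | succ n ih => rw [Function.iterate_succ_apply', EI_inv, ih]

lemma EI_bound {f : Y → ℝ} {C : ℝ} (hC : ∀ x, |f x| ≤ C) (y : Y) : |EI μ T f y| ≤ C := by
  unfold EI
  have := norm_integral_le_of_norm_le_const (μ := ker μ T y) (f := f) (C := C)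
    (Eventually.of_forall hC)
  simpa using this

lemma BM.EI {f : Y → ℝ} (hf : BM f) : BM (EI μ T f) := by
  obtain ⟨C, hC⟩ := hf.bdd
  exact ⟨(EI_smeas hf.meas).measurable.mono (MeasurableSpace.invariants_le T) le_rfl, C,
    EI_bound hC⟩

lemma EI_ae {f : Y → ℝ} (hf : BM f) : μ[f | MeasurableSpace.invariants T] =ᵐ[μ] EI μ T f :=
  condExp_ae_eq_integral_condExpKernel (MeasurableSpace.invariants_le T) (hf.integrable μ)

lemma EI_add {f g : Y → ℝ} (hf : BM f) (hg : BM g) (y : Y) :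
    EI μ T (fun x => f x + g x) y = EI μ T f y + EI μ T g y :=
  integral_add (hf.integrable _) (hg.integrable _)

lemma EI_sub {f g : Y → ℝ} (hf : BM f) (hg : BM g) (y : Y) :
    EI μ T (fun x => f x - g x) y = EI μ T f y - EI μ T g y :=
  integral_sub (hf.integrable _) (hg.integrable _)

/-- strictly invariant version -/
lemma exists_invariant_version (hT : MeasurePreserving T μ μ) {p : Y → ℝ} (hp : Measurable p)
    (h : (fun y => p (T y)) =ᵐ[μ] p) :
    ∃ q : Y → ℝ, Measurable[MeasurableSpace.invariants T] q ∧ q =ᵐ[μ] p := by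
  refine ⟨fun y => limsup (fun n => p (T^[n] y)) atTop, ?_, ?_⟩
  · have h1 : Measurable fun y => limsup (fun n => p (T^[n] y)) atTop :=
      Measurable.limsup fun n => hp.comp (hT.iterate n).measurable
    have h2 : ∀ y, limsup (fun n => p (T^[n] (T y))) atTop = limsup (fun n => p (T^[n] y)) atTop := by
      intro y
      have := limsup_nat_add (fun n => p (T^[n] y)) 1
      simpa [Function.iterate_succ_apply] using this
    refine MeasurableSpace.measurable_invariants_dom.2 ⟨h1, fun s hs => ?_⟩
    ext y
    simp only [Set.mem_preimage]
    rw [Function.comp_apply, h2]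
  · have h3 : ∀ n, (fun y => p (T^[n] y)) =ᵐ[μ] p := by
      intro n
      induction n with
      | zero => rfl
      | succ n ih =>
        have := hT.quasiMeasurePreserving.ae_eq_comp ih
        filter_upwards [this, h] with y hy hy2
        simp only [Function.comp_apply] at hy
        rw [Function.iterate_succ_apply, hy, hy2]
    filter_upwards [ae_all_iff.2 h3] with y hy
    simp [hy]

lemma integral_inv_mul_EI {q f : Y → ℝ} (hq : Measurable[MeasurableSpace.invariants T] q)
    (hq2 : MemLp q 2 μ) (hf : BM f) :
    ∫ y, q y * f y ∂μ = ∫ y, q y * EI μ T f y ∂μ := by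
  have hi : Integrable (q * f) μ := MemLp.integrable_mul hq2 (hf.memLp μ 2)
  have := condExp_mul_of_stronglyMeasurable_left (m := MeasurableSpace.invariants T)
    hq.stronglyMeasurable hi (hf.integrable μ)
  rw [← integral_condExp (MeasurableSpace.invariants_le T) (f := fun y => q y * f y)]
  apply integral_congr_ae
  filter_upwards [this, EI_ae (T := T) (μ := μ) hf] with y h1 h2
  change (μ[q * f|MeasurableSpace.invariants T]) y = _
  rw [h1, Pi.mul_apply, h2]

/-- mean ergodic theorem -/
lemma mean_ergodic (hT : MeasurePreserving T μ μ) {f : Y → ℝ} (hf : BM f) :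
    Tendsto (fun N => nrm μ (fun y => avg N (fun n => f (T^[n] y)) - EI μ T f y)) atTop (nhds 0) := by
  set h : Y → ℝ := fun y => f y - EI μ T f y with hh
  have hhB : BM h := hf.sub hf.EI
  set U : Lp ℝ 2 μ →L[ℝ] Lp ℝ 2 μ :=
    (Lp.compMeasurePreservingₗᵢ ℝ T hT).toContinuousLinearMap with hU
  have hUn : ‖U‖ ≤ 1 := LinearIsometry.norm_toContinuousLinearMap_le _
  set H := (hhB.memLp μ 2).toLp h with hH
  have hlim := ContinuousLinearMap.tendsto_birkhoffAverage_orthogonalProjection U hUn H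
  set K := (((U : Lp ℝ 2 μ →ₗ[ℝ] Lp ℝ 2 μ)).eqLocus ((1 : Lp ℝ 2 μ →L[ℝ] Lp ℝ 2 μ) : Lp ℝ 2 μ →ₗ[ℝ] Lp ℝ 2 μ)) with hK
  set P : Lp ℝ 2 μ := (K.orthogonalProjectionOnto H : Lp ℝ 2 μ) with hP
  have hPK : P ∈ K := (K.orthogonalProjectionOnto H).2
  have hUP : U P = P := by simpa [hK] using hPK
  have hUP' : (Lp.compMeasurePreserving T hT) P = P := hUP
  -- P = 0
  have hP0 : P = 0 := by
    obtain ⟨p, hp, hpP⟩ : ∃ p : Y → ℝ, Measurable p ∧ (P : Y → ℝ) =ᵐ[μ] p :=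
      ⟨(Lp.stronglyMeasurable P).measurable.aemeasurable.mk _,
        (Lp.stronglyMeasurable P).measurable.aemeasurable.measurable_mk,
        (Lp.stronglyMeasurable P).measurable.aemeasurable.ae_eq_mk⟩
    have hpT : (fun y => p (T y)) =ᵐ[μ] p := by
      have h1 := Lp.coeFn_compMeasurePreserving P hT
      rw [hUP'] at h1
      have h2 := hT.quasiMeasurePreserving.ae_eq_comp hpP
      filter_upwards [h1, h2, hpP] with y a b c
      simp only [Function.comp_apply] at a b
      rw [← b, ← a, c]
    obtain ⟨q, hq, hqp⟩ := exists_invariant_version hT hp hpT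
    have hqP : q =ᵐ[μ] P := hqp.trans hpP.symm
    have hq2 : MemLp q 2 μ := (memLp_congr_ae hqP).2 (Lp.memLp P)
    have e1 : inner ℝ P P = inner ℝ P H := by
      have hsub : H - P ∈ Kᗮ := by
        simp [hP]
      have : inner ℝ P (H - P) = 0 := (Submodule.mem_orthogonal _ _).1 hsub P hPK
      rw [inner_sub_right] at this
      linarith
    have hqL : hq2.toLp q = P := by
      apply Lp.ext
      exact hq2.coeFn_toLp.trans hqP
    have e2 : inner ℝ P H = ∫ y, q y * h y ∂μ := by
      rw [integral_mul_eq_inner hq2 (hhB.memLp μ 2), hqL]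
    have e3 : ∫ y, q y * h y ∂μ = 0 := by
      rw [integral_inv_mul_EI hq hq2 hhB]
      have i1 := integral_inv_mul_EI hq hq2 hf
      have : ∀ᵐ y ∂μ, EI μ T h y = 0 := by
        have a1 := EI_ae (T := T) (μ := μ) hhB
        have a2 := EI_ae (T := T) (μ := μ) hf
        have a3 := condExp_sub (m := MeasurableSpace.invariants T) (hf.integrable μ)
          ((hf.EI (μ := μ) (T := T)).integrable μ)
        have a4 := condExp_of_stronglyMeasurable (μ := μ) (MeasurableSpace.invariants_le T)
          (EI_smeas (μ := μ) (T := T) hf.meas) ((hf.EI (μ := μ) (T := T)).integrable μ)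
        filter_upwards [a1, a2, a3] with y b1 b2 b3
        rw [← b1]
        change (μ[f - EI μ T f|MeasurableSpace.invariants T]) y = 0
        rw [b3, Pi.sub_apply, b2, a4, sub_self]
      rw [integral_eq_zero_of_ae]
      filter_upwards [this] with y hy
      simp [hy]
    have : inner ℝ P P = 0 := by rw [e1, e2, e3]
    exact inner_self_eq_zero.1 this
  rw [hP0] at hlim
  have hlim2 := hlim.norm
  rw [norm_zero] at hlim2
  refine hlim2.congr' ?_
  filter_upwards [eventually_gt_atTop 0] with N hN
  have hmeas : ∀ n, Measurable (T^[n]) := fun n => (hT.iterate n).measurable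
  have hB : BM (fun y => avg N (fun n => h (T^[n] y))) := BM.avg N fun n => hhB.comp (hmeas n)
  have hUit : ∀ n, U^[n] H = ((hhB.comp (hmeas n)).memLp μ 2).toLp _ := by
    intro n
    induction n with
    | zero => rfl
    | succ n ih =>
      rw [Function.iterate_succ_apply', ih]
      change Lp.compMeasurePreserving T hT _ = _
      rw [Lp.toLp_compMeasurePreserving]
      congr 1
  have key : birkhoffAverage ℝ U id N H = (hB.memLp μ 2).toLp _ := by
    rw [birkhoffAverage, birkhoffSum]
    apply Lp.ext
    refine EventuallyEq.trans ?_ (hB.memLp μ 2).coeFn_toLp.symm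
    refine (Lp.coeFn_smul _ _).trans ?_
    have e1 := Lp.coeFn_finsetSum (range N) (fun n => id (U^[n] H))
    have e2 : ∀ n, (U^[n] H : Y → ℝ) =ᵐ[μ] fun y => h (T^[n] y) := by
      intro n; rw [hUit]; exact MemLp.coeFn_toLp _
    filter_upwards [e1, ae_all_iff.2 e2] with y a b
    rw [Pi.smul_apply, a, avg]
    simp [b]
  rw [key, ← nrm_eq_norm (hB.memLp μ 2)]
  congr 1
  ext y
  rw [hh]
  simp only [avg_sub, EI_inv_iter, avg_const hN]

end EI
end HKP

namespace HKP
open ProbabilityTheory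

section dense
variable {Y : Type*} [m0 : MeasurableSpace Y] {μ : Measure Y} [IsProbabilityMeasure μ]

lemma BM.indicator {s : Set Y} (hs : MeasurableSet s) : BM (s.indicator (fun _ => (1:ℝ))) := by
  refine ⟨measurable_const.indicator hs, 1, fun x => ?_⟩
  by_cases hx : x ∈ s <;> simp [hx]

lemma nrm_indicator_sq {s : Set Y} (hs : MeasurableSet s) :
    nrm μ (s.indicator (fun _ => (1:ℝ))) ^ 2 = μ.real s := by
  rw [nrm_sq, ← integral_indicator_one hs]
  congr 1
  ext x
  by_cases hx : x ∈ s <;> simp [hx]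

/-- a class of functions which is an abstract linear space of BM functions -/
structure LinClass (V : Set (Y → ℝ)) : Prop where
  bm : ∀ v ∈ V, BM v
  add : ∀ v ∈ V, ∀ w ∈ V, (fun x => v x + w x) ∈ V
  smul : ∀ (c : ℝ), ∀ v ∈ V, (fun x => c * v x) ∈ V
  one : (fun _ => (1:ℝ)) ∈ V

/-- approximable by V -/
def Appr (μ : Measure Y) (V : Set (Y → ℝ)) (f : Y → ℝ) : Prop :=
  ∀ ε > 0, ∃ v ∈ V, nrm μ (fun x => f x - v x) < ε

variable {V : Set (Y → ℝ)}

lemma Appr.of_mem {f : Y → ℝ} (h : f ∈ V) : Appr μ V f := fun ε hε => ⟨f, h, by simpa [nrm_zero]⟩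

lemma Appr.of_lim {f : Y → ℝ} (hV : LinClass V) (hf : BM f)
    (h : ∀ ε > 0, ∃ v, BM v ∧ Appr μ V v ∧ nrm μ (fun x => f x - v x) < ε) : Appr μ V f := by
  intro ε hε
  obtain ⟨v, hv, hva, hv2⟩ := h (ε/2) (by positivity)
  obtain ⟨w, hw, hw2⟩ := hva (ε/2) (by positivity)
  refine ⟨w, hw, ?_⟩
  have := nrm_tri (μ := μ) hf hv (hV.bm w hw)
  linarith

lemma Appr.add {f g : Y → ℝ} (hV : LinClass V) (hf : BM f) (hg : BM g)
    (h1 : Appr μ V f) (h2 : Appr μ V g) : Appr μ V (fun x => f x + g x) := by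
  intro ε hε
  obtain ⟨v, hv, hv2⟩ := h1 (ε/2) (by positivity)
  obtain ⟨w, hw, hw2⟩ := h2 (ε/2) (by positivity)
  refine ⟨_, hV.add v hv w hw, ?_⟩
  have := nrm_add_le (μ := μ) (hf.sub (hV.bm v hv)) (hg.sub (hV.bm w hw))
  have e : (fun x => f x + g x - (v x + w x)) = fun x => (f x - v x) + (g x - w x) := by
    ext; ring
  rw [e]; linarith

lemma Appr.smul {f : Y → ℝ} (hV : LinClass V) (c : ℝ)
    (h1 : Appr μ V f) : Appr μ V (fun x => c * f x) := by
  intro ε hε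
  obtain ⟨v, hv, hv2⟩ := h1 (ε/(|c|+1)) (by positivity)
  refine ⟨_, hV.smul c v hv, ?_⟩
  have e : (fun x => c * f x - c * v x) = fun x => c * (f x - v x) := by
    ext; ring
  rw [e, nrm_smul]
  have : 0 ≤ nrm μ (fun x => f x - v x) := nrm_nonneg
  rw [lt_div_iff₀ (by positivity)] at hv2
  nlinarith [abs_nonneg c]

lemma Appr.sum {ι : Type*} (hV : LinClass V) (s : Finset ι) {F : ι → Y → ℝ}
    (hF : ∀ i ∈ s, BM (F i)) (h : ∀ i ∈ s, Appr μ V (F i)) :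
    Appr μ V (fun x => ∑ i ∈ s, F i x) := by
  classical
  induction s using Finset.induction_on with
  | empty =>
    have := hV.smul 0 _ hV.one
    simp only [Finset.sum_empty]
    exact Appr.of_mem (by simpa using this)
  | insert a s ha ih =>
    simp only [Finset.sum_insert ha]
    exact Appr.add hV (hF a (by simp)) (BM.sum s fun i hi => hF i (by simp [hi])) (h a (by simp))
      (ih (fun i hi => hF i (by simp [hi])) fun i hi => h i (by simp [hi]))

end dense

lemma dense_of_pi {Y : Type*} {m : MeasurableSpace Y} [m0 : MeasurableSpace Y] {μ : Measure Y}
    [IsProbabilityMeasure μ] {V : Set (Y → ℝ)} (hV : LinClass V) (hm : m ≤ m0) {P : Set (Set Y)}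
    (hgen : m = MeasurableSpace.generateFrom P) (hpi : IsPiSystem P)
    (hind : ∀ s ∈ P, s.indicator (fun _ => (1:ℝ)) ∈ V) {f : Y → ℝ} (hf : BM f)
    (hfm : Measurable[m] f) : Appr μ V f := by
  have hsets : ∀ s, MeasurableSet[m] s → Appr μ V (s.indicator (fun _ => (1:ℝ))) := by
    intro s hs
    induction s, hs using MeasurableSpace.induction_on_inter hgen hpi with
    | empty =>
      have := hV.smul 0 _ hV.one
      exact Appr.of_mem (by simpa using this)
    | basic t ht => exact Appr.of_mem (hind t ht)
    | compl t ht ih =>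
      have e : (tᶜ.indicator (fun _ => (1:ℝ))) =
          fun x => 1 + (-1) * t.indicator (fun _ => (1:ℝ)) x := by
        ext x
        by_cases hx : x ∈ t <;> simp [hx]
      rw [e]
      exact Appr.add hV (BM.const 1) ((BM.const (-1)).mul (BM.indicator (hm _ ht)))
        (Appr.of_mem hV.one) (Appr.smul hV _ ih)
    | iUnion F hd hF ih =>
      have hF' : ∀ i, MeasurableSet (F i) := fun i => hm _ (hF i)
      refine Appr.of_lim hV (BM.indicator (MeasurableSet.iUnion hF')) fun ε hε => ?_
      have hfin : ∀ n, MeasurableSet (⋃ i ∈ range n, F i) := fun n =>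
        Finset.measurableSet_biUnion _ fun i _ => hF' i
      have hlim : Tendsto (fun n => μ.real ((⋃ i, F i) \ ⋃ i ∈ range n, F i)) atTop (nhds 0) := by
        have hmono : Antitone fun n => (⋃ i, F i) \ ⋃ i ∈ range n, F i := by
          intro a b hab
          apply Set.sdiff_subset_sdiff_right
          apply Set.biUnion_subset_biUnion_left
          intro i hi
          simp only [Finset.coe_range, Set.mem_Iio] at hi ⊢
          omega
        have := tendsto_measure_iInter_atTop (μ := μ) (s := fun n => (⋃ i, F i) \ ⋃ i ∈ range n, F i)
          (fun n => ((MeasurableSet.iUnion hF').diff (hfin n)).nullMeasurableSet) hmono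
          ⟨0, measure_ne_top _ _⟩
        have he : (⋂ n, (⋃ i, F i) \ ⋃ i ∈ range n, F i) = ∅ := by
          ext x
          simp only [Set.mem_iInter, Set.mem_sdiff, Set.mem_iUnion, Set.mem_empty_iff_false, iff_false]
          intro h
          obtain ⟨i, hi⟩ := (h 0).1
          exact (h (i+1)).2 ⟨i, by simp, hi⟩
        rw [he, measure_empty] at this
        have h2 := (ENNReal.tendsto_toReal ENNReal.zero_ne_top).comp this
        exact h2
      obtain ⟨n, hn⟩ := (hlim.eventually (gt_mem_nhds (show (0:ℝ) < ε^2 by positivity))).exists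
      refine ⟨fun x => ∑ i ∈ range n, (F i).indicator (fun _ => (1:ℝ)) x,
        BM.sum _ fun i _ => BM.indicator (hF' i),
        Appr.sum hV _ (fun i _ => BM.indicator (hF' i)) fun i _ => ih i, ?_⟩
      have e : (fun x => (⋃ i, F i).indicator (fun _ => (1:ℝ)) x -
          ∑ i ∈ range n, (F i).indicator (fun _ => (1:ℝ)) x) =
          ((⋃ i, F i) \ ⋃ i ∈ range n, F i).indicator (fun _ => (1:ℝ)) := by
        have h1 := Finset.indicator_biUnion (range n) F (f := fun _ => (1:ℝ))
          (fun i _ j _ hij => hd hij)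
        ext x
        rw [← congrFun h1 x]
        by_cases hx : x ∈ ⋃ i ∈ range n, F i
        · have hx2 : x ∈ ⋃ i, F i := by
            simp only [Set.mem_iUnion] at hx ⊢
            obtain ⟨i, _, hi⟩ := hx
            exact ⟨i, hi⟩
          rw [Set.indicator_of_mem hx, Set.indicator_of_mem hx2, Set.indicator_of_notMem (fun h => h.2 hx)]
          simp
        · rw [Set.indicator_of_notMem hx]
          by_cases hx2 : x ∈ ⋃ i, F i
          · rw [Set.indicator_of_mem hx2, Set.indicator_of_mem ((Set.mem_sdiff _).2 ⟨hx2, hx⟩ :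
              x ∈ (⋃ i, F i) \ ⋃ i ∈ range n, F i)]; simp
          · rw [Set.indicator_of_notMem hx2, Set.indicator_of_notMem (fun h => hx2 h.1)]; simp
      rw [e]
      rw [← nrm_indicator_sq ((MeasurableSet.iUnion hF').diff (hfin n))] at hn
      exact lt_of_pow_lt_pow_left₀ 2 hε.le hn
  refine Appr.of_lim hV hf fun ε hε => ?_
  obtain ⟨C, hC0, hC⟩ := hf.bdd'
  obtain ⟨n, hn⟩ := exists_nat_one_div_lt hε
  have hn0 : (0:ℝ) < n + 1 := by positivity
  set K : ℤ := ⌈(n+1) * C⌉ + 1 with hK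
  set S : ℤ → Set Y := fun k => {x | ⌊(n+1) * f x⌋ = k} with hS
  have hSm : ∀ k, MeasurableSet[m] (S k) := by
    intro k
    have : Measurable[m] fun x => ⌊((n:ℝ)+1) * f x⌋ := Int.measurable_floor.comp (hfm.const_mul _)
    exact this (measurableSet_singleton k)
  refine ⟨fun x => ∑ k ∈ Finset.Icc (-K) K, ((k:ℝ)/(n+1)) * (S k).indicator (fun _ => (1:ℝ)) x,
    BM.sum _ fun k _ => (BM.const _).mul (BM.indicator (hm _ (hSm k))),
    Appr.sum hV _ (fun k _ => (BM.const _).mul (BM.indicator (hm _ (hSm k))))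
      fun k _ => Appr.smul hV _ (hsets _ (hSm k)), ?_⟩
  refine lt_of_le_of_lt (nrm_le_of_bound (C := 1/((n:ℝ)+1)) fun x => ?_) hn
  have hmem : ⌊((n:ℝ)+1) * f x⌋ ∈ Finset.Icc (-K) K := by
    have h1 := abs_le.1 (hC x)
    rw [Finset.mem_Icc]
    have hce := Int.le_ceil (((n:ℝ)+1) * C)
    constructor
    · rw [Int.le_floor, hK]; push_cast; nlinarith
    · rw [← Int.lt_add_one_iff, Int.floor_lt, hK]; push_cast; nlinarith
  beta_reduce
  rw [Finset.sum_eq_single_of_mem _ hmem]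
  · rw [Set.indicator_of_mem (by simp [hS])]
    have h1 := Int.floor_le (((n:ℝ)+1) * f x)
    have h2 := Int.lt_floor_add_one (((n:ℝ)+1) * f x)
    rw [mul_one, abs_le]
    constructor
    · have : (⌊((n:ℝ)+1) * f x⌋ : ℝ) / (n+1) ≤ f x := by
        rw [div_le_iff₀ hn0]; linarith
      have : (0:ℝ) ≤ 1/((n:ℝ)+1) := by positivity
      linarith
    · rw [sub_le_iff_le_add, ← add_div, le_div_iff₀ hn0]
      linarith
  · intro k _ hk
    rw [Set.indicator_of_notMem (by simpa [hS] using hk.symm)]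
    simp

lemma dense_tensor {Y Z : Type*} [MeasurableSpace Y] [MeasurableSpace Z] {ρ : Measure (Y × Z)} [IsProbabilityMeasure ρ]
    {V : Set (Y × Z → ℝ)} (hV : LinClass V)
    (ht : ∀ (a : Y → ℝ) (b : Z → ℝ), BM a → BM b → (fun p : Y × Z => a p.1 * b p.2) ∈ V)
    {f : Y × Z → ℝ} (hf : BM f) : Appr ρ V f := by
  refine dense_of_pi hV le_rfl generateFrom_prod.symm isPiSystem_prod ?_ hf hf.meas
  rintro _ ⟨s, hs, t, hts, rfl⟩
  have := ht _ _ (BM.indicator hs) (BM.indicator hts)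
  convert this using 1
  ext ⟨x, y⟩
  by_cases hx : x ∈ s <;> by_cases hy : y ∈ t <;> simp [hx, hy]

end HKP

namespace HKP
open ProbabilityTheory

lemma le_of_forall_tendsto {a : ℝ} {u : ℕ → ℝ} (h : ∀ N, a ≤ u N)
    (hu : Tendsto u atTop (nhds 0)) : a ≤ 0 :=
  ge_of_tendsto' hu h

section EI2
variable {Y : Type*} [mY : MeasurableSpace Y] [StandardBorelSpace Y]
  {μ : Measure Y} [IsProbabilityMeasure μ] {T : Y → Y}

lemma comm_iter {α T : Y → Y} (h : ∀ y, α (T y) = T (α y)) (n : ℕ) (y : Y) :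
    α (T^[n] y) = T^[n] (α y) :=
  (Function.Commute.iterate_right (f := α) (g := T) (fun y => h y) n) y

lemma EI_comm (hT : MeasurePreserving T μ μ) {α : Y → Y} (hα : MeasurePreserving α μ μ)
    (hc : ∀ y, α (T y) = T (α y)) {f : Y → ℝ} (hf : BM f) :
    EI μ T (fun y => f (α y)) =ᵐ[μ] fun y => EI μ T f (α y) := by
  have hfa : BM fun y => f (α y) := hf.comp hα.measurable
  apply ae_eq_of_nrm hfa.EI (hf.EI.comp hα.measurable)
  apply le_antisymm _ nrm_nonneg
  have l1 := mean_ergodic hT hfa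
  have l2 := mean_ergodic hT hf
  have l3 := l1.add l2
  rw [add_zero] at l3
  refine le_of_forall_tendsto (fun N => ?_) l3
  have hA : BM fun y => avg N (fun n => f (T^[n] y)) :=
    BM.avg N fun n => hf.comp (hT.iterate n).measurable
  have hA' : BM fun y => avg N (fun n => f (T^[n] (α y))) := hA.comp hα.measurable
  have e1 := nrm_comp hα (hA.sub (hf.EI (μ := μ) (T := T)))
  have e2 := nrm_tri (μ := μ) (hfa.EI (T := T) (μ := μ)) hA' ((hf.EI (T := T) (μ := μ)).comp hα.measurable)
  rw [e1] at e2
  refine e2.trans (le_of_eq ?_)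
  rw [nrm_sub_comm]
  simp only [comm_iter hc]

lemma EI_congr {f g : Y → ℝ} (hf : BM f) (hg : BM g) (h : f =ᵐ[μ] g) :
    EI μ T f =ᵐ[μ] EI μ T g :=
  (EI_ae hf).symm.trans ((condExp_congr_ae h).trans (EI_ae hg))

lemma EI_of_inv (hT : MeasurePreserving T μ μ) {f : Y → ℝ} (hf : BM f)
    (h : (fun y => f (T y)) =ᵐ[μ] f) : EI μ T f =ᵐ[μ] f := by
  obtain ⟨q, hq, hqf⟩ := exists_invariant_version hT hf.meas h
  have hqi : Integrable q μ := (integrable_congr hqf).2 (hf.integrable μ)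
  have := condExp_of_stronglyMeasurable (μ := μ) (MeasurableSpace.invariants_le T)
    hq.stronglyMeasurable hqi
  have h2 := condExp_congr_ae (m := MeasurableSpace.invariants T) hqf
  rw [this] at h2
  exact (EI_ae hf).symm.trans (h2.symm.trans hqf)

lemma meas_inv_of {w : Y → ℝ} (hw : Measurable w) (h : ∀ y, w (T y) = w y) :
    Measurable[MeasurableSpace.invariants T] w := by
  refine MeasurableSpace.measurable_invariants_dom.2 ⟨hw, fun s hs => ?_⟩
  ext y
  simp [h]

lemma EI_meas_inv {f : Y → ℝ} (hf : Measurable f) :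
    Measurable[MeasurableSpace.invariants T] (EI μ T f) := (EI_smeas hf).measurable

lemma EI_mul_inv {w f : Y → ℝ} (hw : BM w) (hwi : ∀ y, w (T y) = w y) (hf : BM f) :
    EI μ T (fun y => w y * f y) =ᵐ[μ] fun y => w y * EI μ T f y := by
  have := condExp_mul_of_stronglyMeasurable_left (μ := μ) (m := MeasurableSpace.invariants T)
    (meas_inv_of hw.meas hwi).stronglyMeasurable ((hw.mul hf).integrable μ) (hf.integrable μ)
  filter_upwards [this, EI_ae (T := T) (μ := μ) hf, EI_ae (T := T) (μ := μ) (hw.mul hf)] with y a b c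
  rw [← c]
  change (μ[w * f|_]) y = _
  rw [a, Pi.mul_apply, b]

lemma integral_mul_EI {q f : Y → ℝ} (hq : BM q) (hqi : ∀ y, q (T y) = q y) (hf : BM f) :
    ∫ y, q y * f y ∂μ = ∫ y, q y * EI μ T f y ∂μ :=
  integral_inv_mul_EI (meas_inv_of hq.meas hqi) (hq.memLp μ 2) hf

lemma integral_EI {f : Y → ℝ} (hf : BM f) : ∫ y, EI μ T f y ∂μ = ∫ y, f y ∂μ := by
  have := integral_mul_EI (μ := μ) (T := T) (BM.const 1) (fun _ => rfl) hf
  simpa using this.symm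

lemma integral_EI_mul {f g : Y → ℝ} (hf : BM f) (hg : BM g) :
    ∫ y, EI μ T f y * g y ∂μ = ∫ y, EI μ T f y * EI μ T g y ∂μ :=
  integral_mul_EI hf.EI EI_inv hg

lemma integral_mul_EI' {f g : Y → ℝ} (hf : BM f) (hg : BM g) :
    ∫ y, f y * EI μ T g y ∂μ = ∫ y, EI μ T f y * EI μ T g y ∂μ := by
  simp only [mul_comm _ (EI μ T g _)]
  exact integral_EI_mul hg hf

lemma EI_nrm_le {f : Y → ℝ} (hf : BM f) : nrm μ (EI μ T f) ≤ nrm μ f := by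
  have h1 : nrm μ (EI μ T f) ^ 2 ≤ nrm μ (EI μ T f) * nrm μ f := by
    rw [nrm_sq', ← integral_EI_mul hf hf]
    exact (le_abs_self _).trans (abs_integral_mul_le hf.EI hf)
  rcases eq_or_lt_of_le (nrm_nonneg (μ := μ) (f := EI μ T f)) with h | h
  · rw [← h]; exact nrm_nonneg
  · nlinarith


variable (μ T) in
/-- relative square -/
noncomputable def relSq : Measure (Y × Y) := μ.compProd (ker μ T)

instance : IsProbabilityMeasure (relSq μ T) := by unfold relSq; infer_instance

variable (μ T) in
/-- conditional expectation onto the first coordinate -/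
noncomputable def RI (Φ : Y × Y → ℝ) (y : Y) : ℝ := ∫ z, Φ (y, z) ∂(ker μ T y)

lemma BM.RI {Φ : Y × Y → ℝ} (h : BM Φ) : BM (RI μ T Φ) := by
  obtain ⟨C, hC⟩ := h.bdd
  refine ⟨?_, C, fun y => ?_⟩
  · exact (MeasureTheory.StronglyMeasurable.integral_kernel_prod_right' (κ := ker μ T)
      h.meas.stronglyMeasurable).measurable
  · have := norm_integral_le_of_norm_le_const (μ := ker μ T y) (f := fun z => Φ (y, z)) (C := C)
      (Eventually.of_forall fun z => hC _)
    simpa [HKP.RI] using this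

lemma integral_relSq {Φ : Y × Y → ℝ} (h : BM Φ) :
    ∫ p, Φ p ∂(relSq μ T) = ∫ y, RI μ T Φ y ∂μ :=
  Measure.integral_compProd (h.integrable _)

lemma BM.tensor {Y Z : Type*} [MeasurableSpace Y] [MeasurableSpace Z] {a : Y → ℝ} {b : Z → ℝ} (ha : BM a) (hb : BM b) :
    BM (fun p : Y × Z => a p.1 * b p.2) :=
  (ha.comp measurable_fst).mul (hb.comp measurable_snd)

lemma RI_fst_mul {a : Y → ℝ} {Φ : Y × Y → ℝ} (y : Y) :
    RI μ T (fun p => a p.1 * Φ p) y = a y * RI μ T Φ y := by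
  simp only [RI, integral_const_mul]

lemma RI_tensor {a b : Y → ℝ} (y : Y) :
    RI μ T (fun p => a p.1 * b p.2) y = a y * EI μ T b y := by
  simp only [RI, integral_const_mul, EI]

lemma RI_sub {Φ Ψ : Y × Y → ℝ} (h : BM Φ) (h' : BM Ψ) (y : Y) :
    RI μ T (fun p => Φ p - Ψ p) y = RI μ T Φ y - RI μ T Ψ y :=
  integral_sub ((h.comp (measurable_prodMk_left)).integrable _)
    ((h'.comp (measurable_prodMk_left)).integrable _)

lemma RI_add {Φ Ψ : Y × Y → ℝ} (h : BM Φ) (h' : BM Ψ) (y : Y) :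
    RI μ T (fun p => Φ p + Ψ p) y = RI μ T Φ y + RI μ T Ψ y :=
  integral_add ((h.comp (measurable_prodMk_left)).integrable _)
    ((h'.comp (measurable_prodMk_left)).integrable _)

lemma RI_smul (c : ℝ) {Φ : Y × Y → ℝ} (y : Y) :
    RI μ T (fun p => c * Φ p) y = c * RI μ T Φ y := by
  simp only [RI, integral_const_mul]

lemma integral_fst_mul {a : Y → ℝ} {Φ : Y × Y → ℝ} (ha : BM a) (h : BM Φ) :
    ∫ p, a p.1 * Φ p ∂(relSq μ T) = ∫ y, a y * RI μ T Φ y ∂μ := by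
  rw [integral_relSq ((ha.comp measurable_fst).mul h)]
  simp only [RI_fst_mul]

lemma integral_tensor {a b : Y → ℝ} (ha : BM a) (hb : BM b) :
    ∫ p, a p.1 * b p.2 ∂(relSq μ T) = ∫ y, a y * EI μ T b y ∂μ := by
  rw [integral_relSq (ha.tensor hb)]
  simp only [RI_tensor]

lemma integral_tensor' {a b : Y → ℝ} (ha : BM a) (hb : BM b) :
    ∫ p, a p.1 * b p.2 ∂(relSq μ T) = ∫ y, EI μ T a y * EI μ T b y ∂μ := by
  rw [integral_tensor ha hb, integral_mul_EI' ha hb]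

lemma measure_ext_tensor {Y Z : Type*} [MeasurableSpace Y] [MeasurableSpace Z]
    {ρ ρ' : Measure (Y × Z)} [IsProbabilityMeasure ρ] [IsProbabilityMeasure ρ']
    (h : ∀ (a : Y → ℝ) (b : Z → ℝ), BM a → BM b →
      ∫ p, a p.1 * b p.2 ∂ρ = ∫ p, a p.1 * b p.2 ∂ρ') : ρ = ρ' := by
  refine Measure.ext_prod fun {s t} hs ht => ?_
  have := h _ _ (BM.indicator hs) (BM.indicator ht)
  have e : (fun p : Y × Z => s.indicator (fun _ => (1:ℝ)) p.1 * t.indicator (fun _ => (1:ℝ)) p.2) =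
      (s ×ˢ t).indicator 1 := by
    ext ⟨x, y⟩
    by_cases hx : x ∈ s <;> by_cases hy : y ∈ t <;> simp [hx, hy]
  rw [e, integral_indicator_one (hs.prod ht), integral_indicator_one (hs.prod ht)] at this
  exact (measureReal_eq_measureReal_iff).1 this

lemma mp_of_tensor {Y Z W : Type*} [MeasurableSpace Y] [MeasurableSpace Z] [MeasurableSpace W]
    {ρ : Measure (Y × Z)} [IsProbabilityMeasure ρ] {ω : Measure W} [IsProbabilityMeasure ω]
    {θ : W → Y × Z} (hθ : Measurable θ)
    (h : ∀ (a : Y → ℝ) (b : Z → ℝ), BM a → BM b →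
      ∫ w, a (θ w).1 * b (θ w).2 ∂ω = ∫ p, a p.1 * b p.2 ∂ρ) : MeasurePreserving θ ω ρ := by
  refine ⟨hθ, ?_⟩
  have := Measure.isProbabilityMeasure_map (μ := ω) hθ.aemeasurable
  refine measure_ext_tensor fun a b ha hb => ?_
  rw [integral_map hθ.aemeasurable
    (f := fun p : Y × Z => a p.1 * b p.2) (ha.tensor hb).meas.aestronglyMeasurable]
  exact h a b ha hb

lemma mp_fst : MeasurePreserving Prod.fst (relSq μ T) μ :=
  ⟨measurable_fst, Measure.fst_compProd μ (ker μ T)⟩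

lemma mp_swap : MeasurePreserving Prod.swap (relSq μ T) (relSq μ T) := by
  refine mp_of_tensor measurable_swap fun a b ha hb => ?_
  rw [integral_tensor' ha hb]
  have := integral_tensor' (μ := μ) (T := T) hb ha
  simp only [Prod.fst_swap, Prod.snd_swap, mul_comm (a _), mul_comm (EI μ T a _)]
  exact this

lemma mp_snd : MeasurePreserving Prod.snd (relSq μ T) μ := by
  have := (mp_fst (μ := μ) (T := T)).comp mp_swap
  exact this

/-- commuting measure preserving maps -/
structure CM (μ : Measure Y) (T g : Y → Y) : Prop where
  mp : MeasurePreserving g μ μ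
  comm : ∀ y, g (T y) = T (g y)

/-- good maps -/
structure Good (μ : Measure Y) (T g : Y → Y) : Prop extends CM μ T g where
  inv : ∀ φ : Y → ℝ, BM φ → (fun y => φ (T y)) =ᵐ[μ] φ → (fun y => φ (g y)) =ᵐ[μ] φ

lemma Good.EI {g : Y → Y} (hg : Good μ T g) {f : Y → ℝ} (hf : BM f) :
    (fun y => EI μ T f (g y)) =ᵐ[μ] EI μ T f :=
  hg.inv _ hf.EI (Eventually.of_forall fun y => EI_inv y)

lemma mp_prodMap (hT : MeasurePreserving T μ μ) {α : Y → Y} (hα : CM μ T α) :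
    MeasurePreserving (Prod.map α α) (relSq μ T) (relSq μ T) := by
  refine mp_of_tensor (hα.mp.measurable.prodMap hα.mp.measurable) fun a b ha hb => ?_
  have h1 := integral_tensor (μ := μ) (T := T) (ha.comp hα.mp.measurable) (hb.comp hα.mp.measurable)
  simp only [Prod.map_fst, Prod.map_snd]
  rw [h1, integral_tensor ha hb, ← integral_comp_mp hα.mp (ha.mul hb.EI)]
  apply integral_congr_ae
  filter_upwards [EI_comm hT hα.mp hα.comm hb] with y hy
  rw [hy]

lemma mp_good_id {g : Y → Y} (hg : Good μ T g) :
    MeasurePreserving (Prod.map g id) (relSq μ T) (relSq μ T) := by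
  refine mp_of_tensor (hg.mp.measurable.prodMap measurable_id) fun a b ha hb => ?_
  have h1 := integral_tensor (μ := μ) (T := T) (ha.comp hg.mp.measurable) hb
  simp only [Prod.map_fst, Prod.map_snd, id]
  rw [h1, integral_tensor ha hb, ← integral_comp_mp hg.mp (ha.mul hb.EI)]
  apply integral_congr_ae
  filter_upwards [hg.EI hb] with y hy
  rw [hy]

lemma good_T (hT : MeasurePreserving T μ μ) : Good μ T T :=
  ⟨⟨hT, fun _ => rfl⟩, fun _ _ h => h⟩

lemma Good.comp {g h : Y → Y} (hg : Good μ T g) (hh : Good μ T h) : Good μ T (g ∘ h) := by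
  refine ⟨⟨hg.mp.comp hh.mp, fun y => by simp [hh.comm, hg.comm]⟩, fun φ hφ hi => ?_⟩
  have h1 := hh.mp.quasiMeasurePreserving.ae_eq_comp (hg.inv φ hφ hi)
  exact h1.trans (hh.inv φ hφ hi)

lemma CM.comp {g h : Y → Y} (hg : CM μ T g) (hh : CM μ T h) : CM μ T (g ∘ h) :=
  ⟨hg.mp.comp hh.mp, fun y => by simp [hh.comm, hg.comm]⟩

lemma CM.id : CM μ T id := ⟨MeasurePreserving.id μ, fun _ => rfl⟩
lemma Good.id : Good μ T id := ⟨CM.id, fun _ _ _ => by rfl⟩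

lemma Good.iter {g : Y → Y} (hg : Good μ T g) (n : ℕ) : Good μ T (g^[n]) := by
  induction n with
  | zero => exact Good.id
  | succ n ih => rw [Function.iterate_succ]; exact ih.comp hg

lemma CM.iter {g : Y → Y} (hg : CM μ T g) (n : ℕ) : CM μ T (g^[n]) := by
  induction n with
  | zero => exact CM.id
  | succ n ih => rw [Function.iterate_succ]; exact ih.comp hg

lemma Good.of_ergodic (he : Ergodic T μ) {g : Y → Y} (hg : CM μ T g) : Good μ T g := by
  refine ⟨hg, fun φ hφ hi => ?_⟩
  obtain ⟨c, hc⟩ := he.ae_eq_const_of_ae_eq_comp_ae hφ.meas.aestronglyMeasurable hi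
  have h1 := hg.mp.quasiMeasurePreserving.ae_eq_comp hc
  filter_upwards [h1, hc] with y a b
  simp only [Function.comp_apply] at a
  rw [a, b]; rfl

lemma mp_id_T (hT : MeasurePreserving T μ μ) :
    MeasurePreserving (Prod.map id T) (relSq μ T) (relSq μ T) := by
  have h1 := (mp_swap (μ := μ) (T := T)).comp ((mp_good_id (good_T hT)).comp mp_swap)
  exact h1

lemma mp_sq (hT : MeasurePreserving T μ μ) :
    MeasurePreserving (Prod.map T T) (relSq μ T) (relSq μ T) :=
  mp_prodMap hT (good_T hT).toCM

lemma map_id_iter (n : ℕ) (p : Y × Y) : (Prod.map id T)^[n] p = (p.1, T^[n] p.2) := by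
  simp [Prod.map_iterate, Prod.map_apply']

lemma map_sq_iter {g : Y → Y} (n : ℕ) (p : Y × Y) : (Prod.map g g)^[n] p = (g^[n] p.1, g^[n] p.2) := by
  simp [Prod.map_iterate, Prod.map_apply']

lemma total_tensor {Y Z : Type*} [MeasurableSpace Y] [MeasurableSpace Z]
    {ρ : Measure (Y × Z)} [IsProbabilityMeasure ρ] {h : Y × Z → ℝ} (hh : BM h)
    (h0 : ∀ (a : Y → ℝ) (b : Z → ℝ), BM a → BM b → ∫ p, h p * (a p.1 * b p.2) ∂ρ = 0) :
    h =ᵐ[ρ] 0 := by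
  set V : Set (Y × Z → ℝ) := {v | BM v ∧ ∫ p, h p * v p ∂ρ = 0} with hV
  have hVl : LinClass V := by
    refine ⟨fun v hv => hv.1, fun v hv w hw => ⟨hv.1.add hw.1, ?_⟩,
      fun c v hv => ⟨(BM.const c).mul hv.1, ?_⟩, BM.const 1, ?_⟩
    · simp only [mul_add]
      rw [integral_add ((hh.mul hv.1).integrable _) ((hh.mul hw.1).integrable _), hv.2, hw.2, add_zero]
    · simp only [mul_left_comm]
      rw [integral_const_mul, hv.2, mul_zero]
    · simpa using h0 _ _ (BM.const 1) (BM.const 1)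
  have hap : Appr ρ V h := dense_tensor hVl (fun a b ha hb => ⟨ha.tensor hb, h0 a b ha hb⟩) hh
  apply ae_eq_zero_of_nrm hh
  by_contra hne
  have hpos : 0 < nrm ρ h := lt_of_le_of_ne nrm_nonneg (Ne.symm hne)
  obtain ⟨v, hv, hv2⟩ := hap (nrm ρ h) hpos
  have h1 : nrm ρ h ^ 2 ≤ nrm ρ (fun x => h x - v x) * nrm ρ h := by
    have := abs_integral_mul_sub_le (μ := ρ) hh hv.1 hh
    rw [nrm_sq']
    have e : ∫ x, v x * h x ∂ρ = 0 := by
      rw [← hv.2]; simp only [mul_comm]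
    rw [e, sub_zero] at this
    exact (le_abs_self _).trans this
  nlinarith

lemma invar_tensor {Y Z : Type*} [MeasurableSpace Y] [MeasurableSpace Z]
    {ρ : Measure (Y × Z)} [IsProbabilityMeasure ρ] {h : Y × Z → ℝ} (hh : BM h)
    {θ : Y × Z → Y × Z} (hθ : MeasurePreserving θ ρ ρ)
    (h0 : ∀ (a : Y → ℝ) (b : Z → ℝ), BM a → BM b →
      ∫ p, h p * (a (θ p).1 * b (θ p).2) ∂ρ = ∫ p, h p * (a p.1 * b p.2) ∂ρ)
    {Ψ : Y × Z → ℝ} (hΨ : BM Ψ) : ∫ p, h p * Ψ (θ p) ∂ρ = ∫ p, h p * Ψ p ∂ρ := by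
  set V : Set (Y × Z → ℝ) := {v | BM v ∧ ∫ p, h p * v (θ p) ∂ρ = ∫ p, h p * v p ∂ρ} with hV
  have hVl : LinClass V := by
    refine ⟨fun v hv => hv.1, fun v hv w hw => ⟨hv.1.add hw.1, ?_⟩,
      fun c v hv => ⟨(BM.const c).mul hv.1, ?_⟩, BM.const 1, ?_⟩
    · simp only [mul_add]
      rw [integral_add ((hh.mul hv.1).integrable _) ((hh.mul hw.1).integrable _),
        integral_add ((hh.mul (hv.1.comp hθ.measurable)).integrable _)
          ((hh.mul (hw.1.comp hθ.measurable)).integrable _), hv.2, hw.2]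
    · simp only [mul_left_comm]
      rw [integral_const_mul, integral_const_mul, hv.2]
    · rfl
  have hap : Appr ρ V Ψ := dense_tensor hVl (fun a b ha hb => ⟨ha.tensor hb, h0 a b ha hb⟩) hΨ
  rw [← sub_eq_zero, ← abs_eq_zero]
  apply le_antisymm _ (abs_nonneg _)
  refine le_of_forall_pos_le_add fun ε hε => ?_
  obtain ⟨v, hv, hv2⟩ := hap (ε / (2 * (nrm ρ h + 1))) (by
    have := nrm_nonneg (μ := ρ) (f := h); positivity)
  have hn := nrm_nonneg (μ := ρ) (f := h)
  have h1 := abs_integral_mul_sub_le (μ := ρ) hΨ hv.1 hh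
  have h2 := abs_integral_mul_sub_le (μ := ρ) (hΨ.comp hθ.measurable) (hv.1.comp hθ.measurable) hh
  rw [nrm_comp hθ (hΨ.sub hv.1)] at h2
  simp only [mul_comm _ (h _)] at h1 h2
  rw [hv.2] at h2
  have h3 : nrm ρ (fun x => Ψ x - v x) * nrm ρ h ≤ ε / 2 := by
    rw [lt_div_iff₀ (by positivity)] at hv2
    have := nrm_nonneg (μ := ρ) (f := fun x => Ψ x - v x)
    nlinarith
  rw [abs_le] at h1 h2 ⊢
  constructor <;> linarith [h1.1, h1.2, h2.1, h2.2]

lemma nrm_RI_le {Φ : Y × Y → ℝ} (h : BM Φ) : nrm μ (RI μ T Φ) ≤ nrm (relSq μ T) Φ := by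
  have h1 : nrm μ (RI μ T Φ) ^ 2 ≤ nrm μ (RI μ T Φ) * nrm (relSq μ T) Φ := by
    rw [nrm_sq', ← integral_fst_mul h.RI h]
    refine (le_abs_self _).trans ((abs_integral_mul_le (h.RI.comp measurable_fst) h).trans ?_)
    rw [nrm_comp mp_fst h.RI]
  rcases eq_or_lt_of_le (nrm_nonneg (μ := μ) (f := RI μ T Φ)) with h | h
  · rw [← h]; exact nrm_nonneg
  · nlinarith

lemma inv_fst_snd (hT : MeasurePreserving T μ μ) {φ : Y → ℝ} (hφ : BM φ)
    (h : (fun y => φ (T y)) =ᵐ[μ] φ) :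
    (fun p : Y × Y => φ p.1) =ᵐ[relSq μ T] fun p => φ p.2 := by
  have h1 := hφ.comp (measurable_fst (α := Y) (β := Y))
  have h2 := hφ.comp (measurable_snd (α := Y) (β := Y))
  apply ae_eq_of_nrm h1 h2
  rw [← sq_eq_zero_iff, nrm_sq]
  have e : ∀ p : Y × Y, (φ p.1 - φ p.2) ^ 2 = φ p.1 * φ p.1 + φ p.2 * φ p.2 - 2 * (φ p.1 * φ p.2) :=
    fun p => by ring
  simp only [e]
  rw [integral_sub (((h1.mul h1).add (h2.mul h2)).integrable _)
    (((BM.const 2).mul (h1.mul h2)).integrable _),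
    integral_add ((h1.mul h1).integrable _) ((h2.mul h2).integrable _), integral_const_mul,
    integral_tensor hφ hφ, integral_comp_mp mp_fst (hφ.mul hφ),
    integral_comp_mp mp_snd (hφ.mul hφ)]
  have : ∫ y, φ y * EI μ T φ y ∂μ = ∫ y, φ y * φ y ∂μ := by
    apply integral_congr_ae
    filter_upwards [EI_of_inv hT hφ h] with y hy
    rw [hy]
  rw [this]; ring

/-- averages of id × T converge to the conditional expectation on first coordinate -/
lemma avg_id_T (hT : MeasurePreserving T μ μ) {Φ : Y × Y → ℝ} (hΦ : BM Φ) :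
    Tendsto (fun N => nrm (relSq μ T) (fun p => avg N (fun n => Φ (p.1, T^[n] p.2)) - RI μ T Φ p.1))
      atTop (nhds 0) := by
  set ρ := relSq μ T
  have hm : ∀ n, MeasurePreserving (fun p : Y × Y => (p.1, T^[n] p.2)) ρ ρ := by
    intro n
    have := (mp_id_T hT).iterate n
    simpa only [show (Prod.map id T)^[n] = fun p => (p.1, T^[n] p.2) from
      funext fun p => map_id_iter n p] using this
  set V : Set (Y × Y → ℝ) := {v | BM v ∧ Tendsto (fun N => nrm ρ
    (fun p => avg N (fun n => v (p.1, T^[n] p.2)) - RI μ T v p.1)) atTop (nhds 0)} with hV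
  have hA : ∀ v, BM v → ∀ N, BM (fun p : Y × Y => avg N (fun n => v (p.1, T^[n] p.2))) :=
    fun v hv N => BM.avg N fun n => hv.comp (hm n).measurable
  have hR : ∀ v, BM v → BM (fun p : Y × Y => RI μ T v p.1) := fun v hv => hv.RI.comp measurable_fst
  have htens : ∀ a b : Y → ℝ, BM a → BM b → (fun p : Y × Y => a p.1 * b p.2) ∈ V := by
    intro a b ha hb
    refine ⟨ha.tensor hb, ?_⟩
    obtain ⟨C, hC⟩ := ha.bdd
    have l1 := (mean_ergodic hT hb).const_mul C
    rw [mul_zero] at l1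
    refine squeeze_zero (fun _ => nrm_nonneg) (fun N => ?_) l1
    have hB : BM fun y => avg N (fun n => b (T^[n] y)) - EI μ T b y :=
      (BM.avg N fun n => hb.comp (hT.iterate n).measurable).sub hb.EI
    have e0 : (fun p : Y × Y => avg N (fun n => (fun p : Y × Y => a p.1 * b p.2) (p.1, T^[n] p.2)) -
        RI μ T (fun p => a p.1 * b p.2) p.1) =ᵐ[ρ]
        fun p => a p.1 * ((fun y => avg N (fun n => b (T^[n] y)) - EI μ T b y) p.2) := by
      filter_upwards [inv_fst_snd hT (hb.EI (μ := μ) (T := T)) (Eventually.of_forall EI_inv)] with p hp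
      simp only [RI_tensor, avg_mul_left]
      rw [hp]; ring
    rw [nrm_congr e0]
    refine (nrm_mul_le (hB.comp measurable_snd) (g := fun p : Y × Y => a p.1)
      (fun p => hC p.1)).trans (le_of_eq ?_)
    rw [nrm_comp mp_snd hB]
  have hVl : LinClass V := by
    refine ⟨fun v hv => hv.1, fun v hv w hw => ⟨hv.1.add hw.1, ?_⟩,
      fun c v hv => ⟨(BM.const c).mul hv.1, ?_⟩, ?_⟩
    · have := hv.2.add hw.2
      rw [add_zero] at this
      refine squeeze_zero (fun _ => nrm_nonneg) (fun N => ?_) this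
      refine le_trans (le_of_eq ?_) (nrm_add_le ((hA v hv.1 N).sub (hR v hv.1))
        ((hA w hw.1 N).sub (hR w hw.1)))
      congr 1; ext p
      simp only [avg_add, RI_add hv.1 hw.1]; ring
    · have := hv.2.const_mul |c|
      rw [mul_zero] at this
      refine this.congr fun N => ?_
      rw [← nrm_smul]
      congr 1; ext p
      simp only [avg_mul_left, RI_smul]; ring
    · simpa using htens _ _ (BM.const 1) (BM.const 1)
  have hap : Appr ρ V Φ := dense_tensor hVl htens hΦ
  rw [Metric.tendsto_atTop]
  intro ε hε
  obtain ⟨v, hv, hv2⟩ := hap (ε/4) (by positivity)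
  obtain ⟨N0, hN0⟩ := Metric.tendsto_atTop.1 hv.2 (ε/4) (by positivity)
  refine ⟨N0, fun N hN => ?_⟩
  have h0 := hN0 N hN
  rw [Real.dist_eq, sub_zero, abs_of_nonneg nrm_nonneg] at h0 ⊢
  have t1 := nrm_tri (μ := ρ) (hA Φ hΦ N) (hA v hv.1 N) (hR Φ hΦ)
  have t2 := nrm_tri (μ := ρ) (hA v hv.1 N) (hR v hv.1) (hR Φ hΦ)
  have t3 : nrm ρ (fun p => avg N (fun n => Φ (p.1, T^[n] p.2)) - avg N (fun n => v (p.1, T^[n] p.2)))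
      ≤ ε/4 := by
    simp only [← avg_sub]
    refine (nrm_avg_le N (F := fun n (p : Y × Y) => Φ (p.1, T^[n] p.2) - v (p.1, T^[n] p.2))
      fun n => (hΦ.comp (hm n).measurable).sub (hv.1.comp (hm n).measurable)).trans ?_
    refine avg_le_const N (by positivity) fun n => ?_
    rw [nrm_comp (hm n) (hΦ.sub hv.1)]
    exact hv2.le
  have t4 : nrm ρ (fun p => RI μ T v p.1 - RI μ T Φ p.1) ≤ ε/4 := by
    rw [nrm_sub_comm]
    simp only [← RI_sub hΦ hv.1]
    rw [nrm_comp mp_fst (hΦ.sub hv.1).RI]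
    exact (nrm_RI_le (hΦ.sub hv.1)).trans hv2.le
  linarith

end EI2
end HKP

namespace HKP
open ProbabilityTheory

lemma avg_le_const' (N : ℕ) {u : ℕ → ℝ} {c : ℝ} (hc : 0 ≤ c) (h : ∀ n < N, u n ≤ c) :
    avg N u ≤ c := by
  have : avg N u = avg N (fun n => if n < N then u n else 0) := by
    unfold avg
    congr 1
    refine Finset.sum_congr rfl fun n hn => ?_
    beta_reduce
    rw [if_pos (by simpa using hn)]
  rw [this]
  refine avg_le_const N hc fun n => ?_
  split_ifs with h1
  · exact h n h1
  · exact hc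

section L2
variable {Y : Type*} [mY : MeasurableSpace Y] [StandardBorelSpace Y]
  {μ : Measure Y} [IsProbabilityMeasure μ] {T : Y → Y}

lemma EI_avg (N : ℕ) {F : ℕ → Y → ℝ} (hF : ∀ n, BM (F n)) (y : Y) :
    EI μ T (fun x => avg N (fun n => F n x)) y = avg N (fun n => EI μ T (F n) y) :=
  integral_avg (μ := ker μ T y) N hF

lemma RI_avg (N : ℕ) {F : ℕ → Y × Y → ℝ} (hF : ∀ n, BM (F n)) (y : Y) :
    RI μ T (fun x => avg N (fun n => F n x)) y = avg N (fun n => RI μ T (F n) y) :=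
  integral_avg (μ := ker μ T y) N fun n => (hF n).comp measurable_prodMk_left

lemma CM.prod (hT : MeasurePreserving T μ μ) {α : Y → Y} (hα : CM μ T α) :
    CM (relSq μ T) (Prod.map T T) (Prod.map α α) :=
  ⟨mp_prodMap hT hα, fun p => by simp [Prod.map, hα.comm]⟩

lemma RI_comm (hT : MeasurePreserving T μ μ) {α : Y → Y} (hα : CM μ T α) {Φ : Y × Y → ℝ}
    (hΦ : BM Φ) : RI μ T (fun p => Φ (Prod.map α α p)) =ᵐ[μ] fun y => RI μ T Φ (α y) := by
  have hmp := mp_prodMap hT hα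
  set V : Set (Y × Y → ℝ) := {v | BM v ∧
    RI μ T (fun p => v (Prod.map α α p)) =ᵐ[μ] fun y => RI μ T v (α y)} with hV
  have ht : ∀ a b : Y → ℝ, BM a → BM b → (fun p : Y × Y => a p.1 * b p.2) ∈ V := by
    intro a b ha hb
    refine ⟨ha.tensor hb, ?_⟩
    filter_upwards [EI_comm hT hα.mp hα.comm hb] with y hy
    rw [RI_tensor, ← hy]
    exact RI_tensor (a := fun y => a (α y)) (b := fun y => b (α y)) y
  have hVl : LinClass V := by
    refine ⟨fun v hv => hv.1, fun v hv w hw => ⟨hv.1.add hw.1, ?_⟩,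
      fun c v hv => ⟨(BM.const c).mul hv.1, ?_⟩, ?_⟩
    · filter_upwards [hv.2, hw.2] with y h1 h2
      rw [RI_add hv.1 hw.1, ← h1, ← h2]
      exact RI_add (hv.1.comp hmp.measurable) (hw.1.comp hmp.measurable) y
    · filter_upwards [hv.2] with y h1
      rw [RI_smul, RI_smul, h1]
    · simpa using ht _ _ (BM.const 1) (BM.const 1)
  have hap : Appr (relSq μ T) V Φ := dense_tensor hVl ht hΦ
  have hΦ' : BM (fun p => Φ (Prod.map α α p)) := hΦ.comp hmp.measurable
  apply ae_eq_of_nrm hΦ'.RI (hΦ.RI.comp hα.mp.measurable)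
  apply le_antisymm _ nrm_nonneg
  refine le_of_forall_pos_le_add fun ε hε => ?_
  obtain ⟨v, hv, hv2⟩ := hap (ε/2) (by positivity)
  have hv' : BM (fun p => v (Prod.map α α p)) := hv.1.comp hmp.measurable
  have t1 := nrm_tri (μ := μ) (hΦ'.RI (μ := μ) (T := T)) (hv'.RI (μ := μ) (T := T))
    ((hΦ.RI (μ := μ) (T := T)).comp hα.mp.measurable)
  have t2 : nrm μ (fun x => RI μ T (fun p => Φ (Prod.map α α p)) x
      - RI μ T (fun p => v (Prod.map α α p)) x) ≤ ε/2 := by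
    simp only [← RI_sub hΦ' hv']
    refine (nrm_RI_le (hΦ'.sub hv')).trans ?_
    rw [nrm_comp hmp (hΦ.sub hv.1)]
    exact hv2.le
  have t3 : nrm μ (fun x => RI μ T (fun p => v (Prod.map α α p)) x - RI μ T Φ (α x)) ≤ ε/2 := by
    have : (fun x => RI μ T (fun p => v (Prod.map α α p)) x - RI μ T Φ (α x)) =ᵐ[μ]
        fun x => (fun y => RI μ T v y - RI μ T Φ y) (α x) := by
      filter_upwards [hv.2] with y hy
      rw [hy]
    rw [nrm_congr this, nrm_comp hα.mp (hv.1.RI.sub hΦ.RI), nrm_sub_comm]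
    simp only [← RI_sub hΦ hv.1]
    exact (nrm_RI_le (hΦ.sub hv.1)).trans hv2.le
  linarith

variable (μ T) in
/-- deviation of ergodic averages -/
noncomputable def DK (K : ℕ) (r : Y → ℝ) (y : Y) : ℝ := avg K (fun k => r (T^[k] y)) - EI μ T r y

lemma BM.DK (hT : MeasurePreserving T μ μ) (K : ℕ) {r : Y → ℝ} (hr : BM r) : BM (DK μ T K r) :=
  (BM.avg K fun n => hr.comp (hT.iterate n).measurable).sub hr.EI

lemma nrm_DK_le (hT : MeasurePreserving T μ μ) (K : ℕ) {r : Y → ℝ} (hr : BM r) :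
    nrm μ (DK μ T K r) ≤ 2 * nrm μ r := by
  have h1 := nrm_sub_le (μ := μ) (BM.avg K fun n => hr.comp (hT.iterate n).measurable)
    (hr.EI (μ := μ) (T := T))
  have h2 : nrm μ (fun y => avg K (fun k => r (T^[k] y))) ≤ nrm μ r := by
    refine (nrm_avg_le K (F := fun k y => r (T^[k] y))
      fun n => hr.comp (hT.iterate n).measurable).trans ?_
    refine avg_le_const K nrm_nonneg fun n => ?_
    rw [nrm_comp (hT.iterate n) hr]
  have h3 := EI_nrm_le (μ := μ) (T := T) hr
  have h4 : nrm μ (DK μ T K r) = nrm μ (fun y => avg K (fun k => r (T^[k] y)) - EI μ T r y) := rfl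
  linarith

lemma DK_sub (K : ℕ) {r s : Y → ℝ} (hr : BM r) (hs : BM s) (y : Y) :
    DK μ T K (fun y => r y - s y) y = DK μ T K r y - DK μ T K s y := by
  simp only [DK, avg_sub, EI_sub hr hs]; ring

lemma DK_avg (K J : ℕ) {F : ℕ → Y → ℝ} (hF : ∀ n, BM (F n)) (y : Y) :
    DK μ T K (fun x => avg J (fun n => F n x)) y = avg J (fun n => DK μ T K (F n) y) := by
  simp only [DK, EI_avg J hF, avg_sub]
  rw [avg_comm]

lemma DK_mul (K : ℕ) {w r : Y → ℝ} (hw : BM w) (hi : ∀ y, w (T y) = w y) (hr : BM r) :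
    DK μ T K (fun y => w y * r y) =ᵐ[μ] fun y => w y * DK μ T K r y := by
  have hi' : ∀ n y, w (T^[n] y) = w y := by
    intro n y
    induction n with
    | zero => rfl
    | succ n ih => rw [Function.iterate_succ_apply', hi, ih]
  filter_upwards [EI_mul_inv (μ := μ) (T := T) hw hi hr] with y hy
  simp only [DK, hi', avg_mul_left, hy]; ring

lemma DK_congr (hT : MeasurePreserving T μ μ) (K : ℕ) {r s : Y → ℝ} (hr : BM r) (hs : BM s)
    (h : r =ᵐ[μ] s) : DK μ T K r =ᵐ[μ] DK μ T K s := by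
  have h1 : ∀ n, (fun y => r (T^[n] y)) =ᵐ[μ] fun y => s (T^[n] y) := fun n =>
    (hT.iterate n).quasiMeasurePreserving.ae_eq_comp h
  filter_upwards [ae_all_iff.2 h1, EI_congr (T := T) hr hs h] with y a b
  simp only [DK, a, b]

lemma DK_tendsto (hT : MeasurePreserving T μ μ) {r : Y → ℝ} (hr : BM r) :
    Tendsto (fun K => nrm μ (DK μ T K r)) atTop (nhds 0) := mean_ergodic hT hr

variable (μ T) in
/-- structured functions -/
noncomputable def Dst (e p q : Y → ℝ) : Y → ℝ :=
  RI μ T (fun z => e z.2 * EI (relSq μ T) (Prod.map T T) (fun z => p z.1 * q z.2) z)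

lemma BM.Dst {e p q : Y → ℝ} (he : BM e) (hp : BM p) (hq : BM q) : BM (Dst μ T e p q) :=
  ((he.comp measurable_snd).mul (hp.tensor hq).EI).RI

lemma lemU (hT : MeasurePreserving T μ μ) {e p q c : Y → ℝ} (he : BM e) (hp : BM p) (hq : BM q)
    (hc : BM c) (ε : ℝ) (hε : 0 < ε) : ∃ K0, ∀ K ≥ K0, ∀ h,
      nrm μ (DK μ T K (fun y => c y * Dst μ T e p q (T^[h] y))) < ε := by
  have hTT := mp_sq (μ := μ) hT
  obtain ⟨Ce, hCe0, hCe⟩ := he.bdd'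
  obtain ⟨Cq, hCq0, hCq⟩ := hq.bdd'
  obtain ⟨Cc, hCc0, hCc⟩ := hc.bdd'
  have hF := (hp.tensor hq).EI (μ := relSq μ T) (T := Prod.map T T)
  set F := EI (relSq μ T) (Prod.map T T) (fun z => p z.1 * q z.2) with hFdef
  have hη : 0 < ε / (4 * Cc * Ce) := by positivity
  obtain ⟨J, hJ⟩ := ((mean_ergodic hTT (hp.tensor hq)).eventually (gt_mem_nhds hη)).exists
  simp only [map_sq_iter] at hJ
  rw [← hFdef] at hJ
  set G : Y × Y → ℝ := fun z => avg J (fun n => p (T^[n] z.1) * q (T^[n] z.2)) with hG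
  have hGi : ∀ n, BM (fun z : Y × Y => p (T^[n] z.1) * q (T^[n] z.2)) := fun n =>
    (hp.comp (hT.iterate n).measurable).tensor (hq.comp (hT.iterate n).measurable)
  have hGB : BM G := BM.avg J hGi
  have hrj : ∀ j, BM (fun y => c y * p (T^[j] y)) := fun j =>
    hc.mul (hp.comp (hT.iterate j).measurable)
  have hK : ∃ K0, ∀ K ≥ K0, ∀ j < J, nrm μ (DK μ T K (fun y => c y * p (T^[j] y))) <
      ε / (4 * Ce * Cq) := by
    have : ∀ᶠ K in atTop, ∀ j ∈ range J, nrm μ (DK μ T K (fun y => c y * p (T^[j] y))) <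
      ε / (4 * Ce * Cq) := (Finset.eventually_all _).2 fun j _ =>
        (DK_tendsto hT (hrj j)).eventually (gt_mem_nhds (by positivity))
    obtain ⟨K0, hK0⟩ := eventually_atTop.1 this
    exact ⟨K0, fun K hK j hj => hK0 K hK j (by simpa using hj)⟩
  obtain ⟨K0, hK0⟩ := hK
  refine ⟨K0, fun K hK h => ?_⟩
  have heh : BM (fun y => e (T^[h] y)) := he.comp (hT.iterate h).measurable
  have hD : BM (Dst μ T e p q) := he.Dst hp hq
  set w : ℕ → Y → ℝ := fun j => EI μ T (fun y => e (T^[h] y) * q (T^[j] y)) with hw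
  have hqj : ∀ j, BM (fun y => e (T^[h] y) * q (T^[j] y)) := fun j =>
    heh.mul (hq.comp (hT.iterate j).measurable)
  have hwB : ∀ j, BM (w j) := fun j => (hqj j).EI
  have hwb : ∀ j y, |w j y| ≤ Ce * Cq := fun j => EI_bound fun y => by
    rw [abs_mul]; exact mul_le_mul (hCe _) (hCq _) (abs_nonneg _) hCe0.le
  -- u_h
  have hu : BM (fun y => c y * Dst μ T e p q (T^[h] y)) :=
    hc.mul (hD.comp (hT.iterate h).measurable)
  have hFh : BM (fun z : Y × Y => e (T^[h] z.2) * F z) := (heh.comp measurable_snd).mul hF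
  have hGh : BM (fun z : Y × Y => e (T^[h] z.2) * G z) := (heh.comp measurable_snd).mul hGB
  have e1 : (fun y => Dst μ T e p q (T^[h] y)) =ᵐ[μ] RI μ T (fun z => e (T^[h] z.2) * F z) := by
    have := RI_comm hT ((good_T hT).toCM.iter h) ((he.comp measurable_snd).mul hF)
    filter_upwards [this] with y hy
    rw [Dst, ← hFdef, ← hy]
    congr 1
    ext z
    have : F (Prod.map (T^[h]) (T^[h]) z) = F z := by
      have := EI_inv_iter (μ := relSq μ T) (T := Prod.map T T) (f := fun z => p z.1 * q z.2) h z
      rw [map_sq_iter] at this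
      exact this
    rw [this]; rfl
  have e2 : ∀ y, RI μ T (fun z => e (T^[h] z.2) * G z) y = avg J (fun j => w j y * p (T^[j] y)) := by
    intro y
    have hh : (fun z : Y × Y => e (T^[h] z.2) * G z) =
        fun z => avg J (fun n => p (T^[n] z.1) * (e (T^[h] z.2) * q (T^[n] z.2))) := by
      ext z
      rw [hG, ← avg_mul_left]
      refine avg_congr _ fun n => by ring
    rw [hh, RI_avg J (F := fun n z => p (T^[n] z.1) * (e (T^[h] z.2) * q (T^[n] z.2))) fun n =>
      (hp.comp (hT.iterate n).measurable).tensor (hqj n)]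
    refine avg_congr _ fun n => ?_
    rw [RI_tensor (a := fun y => p (T^[n] y)) (b := fun y => e (T^[h] y) * q (T^[n] y)), mul_comm]
  set u' : Y → ℝ := fun y => avg J (fun j => w j y * (c y * p (T^[j] y))) with hu'
  have hu'B : BM u' := BM.avg J fun j => (hwB j).mul (hrj j)
  have d1 : nrm μ (fun y => c y * Dst μ T e p q (T^[h] y) - u' y) ≤ Cc * (Ce * (ε / (4 * Cc * Ce))) := by
    have : (fun y => c y * Dst μ T e p q (T^[h] y) - u' y) =ᵐ[μ]
        fun y => c y * RI μ T (fun z => e (T^[h] z.2) * (F z - G z)) y := by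
      filter_upwards [e1] with y hy
      have h2 := RI_sub (μ := μ) (T := T) hFh hGh y
      simp only [← mul_sub] at h2
      rw [h2, hy, mul_sub, e2, hu', ← avg_mul_left]
      congr 1
      refine avg_congr _ fun n => by ring
    rw [nrm_congr this]
    have hFG : BM (fun z : Y × Y => e (T^[h] z.2) * (F z - G z)) :=
      (heh.comp measurable_snd).mul (hF.sub hGB)
    refine (nrm_mul_le hFG.RI hCc).trans ?_
    gcongr
    refine (nrm_RI_le hFG).trans ?_
    refine (nrm_mul_le (hF.sub hGB) (g := fun z : Y × Y => e (T^[h] z.2)) fun z => hCe _).trans ?_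
    gcongr
    rw [nrm_sub_comm]
    exact hJ.le
  have d2 : nrm μ (DK μ T K u') ≤ Ce * Cq * (ε / (4 * Ce * Cq)) := by
    have : DK μ T K u' =ᵐ[μ] fun y => avg J (fun j => w j y * DK μ T K (fun y => c y * p (T^[j] y)) y) := by
      have h1 : ∀ j, _ := fun j => DK_mul (μ := μ) (T := T) K (hwB j) (fun y => EI_inv y) (hrj j)
      filter_upwards [ae_all_iff.2 h1] with y hy
      rw [hu', DK_avg K J (F := fun j y => w j y * (c y * p (T^[j] y))) fun j => (hwB j).mul (hrj j)]
      exact avg_congr _ fun j => hy j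
    rw [nrm_congr this]
    refine (nrm_avg_le J (F := fun j y => w j y * DK μ T K (fun y => c y * p (T^[j] y)) y)
      fun j => (hwB j).mul ((hrj j).DK hT K)).trans ?_
    refine avg_le_const' J (by positivity) fun j hj => ?_
    refine (nrm_mul_le ((hrj j).DK hT K) (hwb j)).trans ?_
    gcongr
    exact (hK0 K hK j hj).le
  have d3 := nrm_DK_le hT K (hu.sub hu'B)
  have d4 : nrm μ (DK μ T K (fun y => c y * Dst μ T e p q (T^[h] y))) ≤
      nrm μ (DK μ T K (fun y => c y * Dst μ T e p q (T^[h] y) - u' y)) + nrm μ (DK μ T K u') := by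
    have := nrm_add_le (μ := μ) ((hu.sub hu'B).DK hT K) (hu'B.DK hT K)
    simpa [DK_sub K hu hu'B] using this
  have n1 : Cc * (Ce * (ε / (4 * Cc * Ce))) = ε/4 := by field_simp
  have n2 : Ce * Cq * (ε / (4 * Ce * Cq)) = ε/4 := by field_simp
  rw [n1] at d1
  rw [n2] at d2
  linarith

end L2
end HKP

namespace HKP
open ProbabilityTheory

section L3
variable {Y : Type*} [mY : MeasurableSpace Y] [StandardBorelSpace Y]
  {μ : Measure Y} [IsProbabilityMeasure μ] {T : Y → Y}

/-- weak form of mean ergodic theorem -/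
lemma avg_integral_tendsto (hT : MeasurePreserving T μ μ) {f r : Y → ℝ} (hf : BM f) (hr : BM r) :
    Tendsto (fun N => avg N (fun n => ∫ y, f y * r (T^[n] y) ∂μ)) atTop
      (nhds (∫ y, f y * EI μ T r y ∂μ)) := by
  rw [tendsto_iff_norm_sub_tendsto_zero]
  have l1 := (mean_ergodic hT hr).mul_const (nrm μ f)
  rw [zero_mul] at l1
  refine squeeze_zero (fun _ => norm_nonneg _) (fun N => ?_) l1
  have hA : BM fun y => avg N (fun n => r (T^[n] y)) :=
    BM.avg N fun n => hr.comp (hT.iterate n).measurable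
  have h1 := abs_integral_mul_sub_le (μ := μ) hA hr.EI hf (f' := EI μ T r)
  rw [Real.norm_eq_abs]
  refine le_trans (le_of_eq ?_) h1
  rw [← integral_avg N (F := fun n y => f y * r (T^[n] y))
    fun n => hf.mul (hr.comp (hT.iterate n).measurable)]
  simp only [avg_mul_left]
  simp only [mul_comm (f _)]

variable (μ T) in
/-- the four-point form -/
noncomputable def Lam (a b c d : Y → ℝ) : ℝ :=
  ∫ z, (a z.1 * b z.2) * EI (relSq μ T) (Prod.map T T) (fun z => c z.1 * d z.2) z ∂(relSq μ T)

lemma Lam_lim (hT : MeasurePreserving T μ μ) {a b c d : Y → ℝ} (ha : BM a) (hb : BM b)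
    (hc : BM c) (hd : BM d) :
    Tendsto (fun N => avg N (fun h => ∫ y, EI μ T (fun y => a y * c (T^[h] y)) y *
      EI μ T (fun y => b y * d (T^[h] y)) y ∂μ)) atTop (nhds (Lam μ T a b c d)) := by
  refine (avg_integral_tendsto (mp_sq hT) (ha.tensor hb) (hc.tensor hd)).congr fun N => ?_
  refine avg_congr _ fun h => ?_
  rw [← integral_tensor' (ha.mul (hc.comp (hT.iterate h).measurable))
    (hb.mul (hd.comp (hT.iterate h).measurable))]
  congr 1; ext z
  rw [map_sq_iter]; ring

lemma Lam_symm {a b c d : Y → ℝ} (ha : BM a) (hb : BM b)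
    (hc : BM c) (hd : BM d) : Lam μ T a b c d = Lam μ T c d a b := by
  unfold Lam
  rw [integral_mul_EI' (ha.tensor hb) (hc.tensor hd), integral_mul_EI' (hc.tensor hd) (ha.tensor hb)]
  simp only [mul_comm]

lemma Lam_Dst {a b c d : Y → ℝ} (ha : BM a) (hb : BM b)
    (hc : BM c) (hd : BM d) : Lam μ T c d a b = ∫ y, a y * Dst μ T b c d y ∂μ := by
  rw [Lam_symm hc hd ha hb, Dst, ← integral_fst_mul ha ((hb.comp measurable_snd).mul (hc.tensor hd).EI), Lam]
  simp only [mul_assoc]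

lemma Lam_swap_struct (hT : MeasurePreserving T μ μ) {e p q b c d : Y → ℝ} (he : BM e) (hp : BM p)
    (hq : BM q) (hb : BM b) (hc : BM c) (hd : BM d) :
    Lam μ T c d (Dst μ T e p q) b = Lam μ T b d (Dst μ T e p q) c := by
  set a := Dst μ T e p q with hadef
  have ha : BM a := he.Dst hp hq
  have it : ∀ {f : Y → ℝ} (n : ℕ), BM f → BM (fun y => f (T^[n] y)) :=
    fun n hf => hf.comp (hT.iterate n).measurable
  set X : ℕ → ℝ := fun h => ∫ y, EI μ T (fun y => c y * a (T^[h] y)) y *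
      EI μ T (fun y => d y * b (T^[h] y)) y ∂μ with hX
  set Z : ℕ → ℝ := fun k => ∫ y, EI μ T (fun y => b y * a (T^[k] y)) y *
      EI μ T (fun y => d y * c (T^[k] y)) y ∂μ with hZ
  have lX := Lam_lim hT hc hd ha hb
  have lZ := Lam_lim hT hb hd ha hc
  obtain ⟨Cd, hCd0, hCd⟩ := hd.bdd'
  obtain ⟨Cb, hCb0, hCb⟩ := hb.bdd'
  set α : ℕ → ℕ → ℝ := fun h k => ∫ y, (d y * b (T^[h] y)) * (c (T^[k] y) * a (T^[h] (T^[k] y))) ∂μ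
    with hα
  rw [← sub_eq_zero, ← abs_eq_zero]
  apply le_antisymm _ (abs_nonneg _)
  refine le_of_forall_pos_le_add fun ε hε => ?_
  rw [zero_add]
  obtain ⟨K0, hK0⟩ := lemU hT he hp hq hc (ε / (Cd * Cb)) (by positivity)
  have key : ∀ K ≥ K0, |avg K Z - Lam μ T c d a b| ≤ ε := by
    intro K hK
    have h1 : ∀ h, |avg K (fun k => α h k) - X h| ≤ ε := by
      intro h
      have hca : BM (fun y => c y * a (T^[h] y)) := hc.mul (it h ha)
      have hdb : BM (fun y => d y * b (T^[h] y)) := hd.mul (it h hb)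
      have e1 : avg K (fun k => α h k) = ∫ y, avg K (fun k => c (T^[k] y) * a (T^[h] (T^[k] y))) *
          (d y * b (T^[h] y)) ∂μ := by
        rw [hα]
        rw [← integral_avg K (F := fun k y => (d y * b (T^[h] y)) * (c (T^[k] y) * a (T^[h] (T^[k] y))))
          fun k => hdb.mul (it k hca)]
        simp only [avg_mul_left, mul_comm]
      have e2 : X h = ∫ y, EI μ T (fun y => c y * a (T^[h] y)) y * (d y * b (T^[h] y)) ∂μ := by
        rw [hX, integral_EI_mul hca hdb]
      rw [e1, e2]
      have := abs_integral_mul_sub_le (μ := μ) (BM.avg K fun k => it k hca) (hca.EI (μ := μ) (T := T)) hdb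
      refine this.trans ?_
      have h3 := (hK0 K hK h).le
      have h4 : nrm μ (fun y => d y * b (T^[h] y)) ≤ Cd * Cb := nrm_le_of_bound fun y => by
        rw [abs_mul]; exact mul_le_mul (hCd _) (hCb _) (abs_nonneg _) hCd0.le
      calc _ ≤ ε / (Cd * Cb) * (Cd * Cb) := mul_le_mul h3 h4 nrm_nonneg (by positivity)
        _ = ε := by field_simp
    have h2 : Tendsto (fun H => avg H (fun h => avg K (fun k => α h k))) atTop (nhds (avg K Z)) := by
      simp only [avg_comm _ K]
      unfold avg
      refine Tendsto.const_mul _ (tendsto_finsetSum _ fun k _ => ?_)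
      have hba : BM (fun y => b y * a (T^[k] y)) := hb.mul (it k ha)
      have hdc : BM (fun y => d y * c (T^[k] y)) := hd.mul (it k hc)
      have := avg_integral_tendsto hT hdc hba
      have e1 : Z k = ∫ y, (d y * c (T^[k] y)) * EI μ T (fun y => b y * a (T^[k] y)) y ∂μ := by
        rw [integral_mul_EI' hdc hba]; simp only [hZ, mul_comm]
      rw [e1]
      refine this.congr fun H => ?_
      refine avg_congr _ fun h => ?_
      rw [hα]
      congr 1; ext y
      rw [← Function.iterate_add_apply, ← Function.iterate_add_apply, add_comm h k]; ring
    have h3 := (h2.sub lX).abs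
    refine le_of_tendsto' h3 fun H => ?_
    rw [← avg_sub]
    exact abs_avg_le_const H hε.le fun h => h1 h
  have l := (lZ.sub_const (Lam μ T c d a b)).abs
  rw [abs_sub_comm]
  exact le_of_tendsto l (eventually_atTop.2 ⟨K0, key⟩)

lemma Lam_swap (hT : MeasurePreserving T μ μ) {a b c d : Y → ℝ} (ha : BM a) (hb : BM b)
    (hc : BM c) (hd : BM d) : Lam μ T c d a b = Lam μ T b d a c := by
  have D1 : BM (Dst μ T b c d) := hb.Dst hc hd
  have D2 : BM (Dst μ T c b d) := hc.Dst hb hd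
  have h1 := Lam_swap_struct hT hb hc hd hb hc hd
  have h2 := Lam_swap_struct hT hc hb hd hb hc hd
  rw [Lam_Dst D1 hb hc hd, Lam_Dst D1 hc hb hd] at h1
  rw [Lam_Dst D2 hb hc hd, Lam_Dst D2 hc hb hd] at h2
  have h3 : Dst μ T b c d =ᵐ[μ] Dst μ T c b d := by
    apply ae_eq_of_nrm D1 D2
    rw [← sq_eq_zero_iff, nrm_sq]
    have e : ∀ y, (Dst μ T b c d y - Dst μ T c b d y) ^ 2 =
      (Dst μ T b c d y * Dst μ T b c d y - Dst μ T b c d y * Dst μ T c b d y) -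
      (Dst μ T c b d y * Dst μ T b c d y - Dst μ T c b d y * Dst μ T c b d y) := fun y => by ring
    simp only [e]
    rw [integral_sub (((D1.mul D1).sub (D1.mul D2)).integrable _)
      (((D2.mul D1).sub (D2.mul D2)).integrable _),
      integral_sub ((D1.mul D1).integrable _) ((D1.mul D2).integrable _),
      integral_sub ((D2.mul D1).integrable _) ((D2.mul D2).integrable _)]
    linarith
  rw [Lam_Dst ha hb hc hd, Lam_Dst ha hc hb hd]
  apply integral_congr_ae
  filter_upwards [h3] with y hy
  rw [hy]

lemma good_sq (hT : MeasurePreserving T μ μ) {g : Y → Y} (hg : Good μ T g) :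
    Good (relSq μ T) (Prod.map T T) (Prod.map g g) := by
  have hcm := hg.toCM.prod hT
  have hTT := mp_sq (μ := μ) hT
  refine ⟨hcm, fun Φ hΦ hi => ?_⟩
  set ρ := relSq μ T with hρ
  have it : ∀ {f : Y → ℝ} (n : ℕ), BM f → BM (fun y => f (T^[n] y)) :=
    fun n hf => hf.comp (hT.iterate n).measurable
  have h1 : ∀ a b c d : Y → ℝ, BM a → BM b → BM c → BM d →
      Lam μ T (fun y => c (g y)) (fun y => d (g y)) a b = Lam μ T c d a b := by
    intro a b c d ha hb hc hd
    have hcg := hc.comp hg.mp.measurable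
    have hdg := hd.comp hg.mp.measurable
    rw [Lam_swap hT ha hb hcg hdg, Lam_swap hT ha hb hc hd]
    have l1 := Lam_lim hT hb hdg ha hcg
    have l2 := Lam_lim hT hb hd ha hc
    refine tendsto_nhds_unique l1 (l2.congr fun N => avg_congr _ fun h => ?_)
    apply integral_congr_ae
    have hdc : BM (fun y => d y * c (T^[h] y)) := hd.mul (it h hc)
    filter_upwards [EI_comm hT hg.mp hg.comm hdc, hg.EI hdc] with y e1 e2
    rw [← e2, ← e1]
    simp only [comm_iter hg.comm]
  have h2 : ∀ a b : Y → ℝ, BM a → BM b → ∀ Ψ : Y × Y → ℝ, BM Ψ →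
      ∫ z, EI ρ (Prod.map T T) (fun z => a z.1 * b z.2) z * Ψ (Prod.map g g z) ∂ρ =
      ∫ z, EI ρ (Prod.map T T) (fun z => a z.1 * b z.2) z * Ψ z ∂ρ := by
    intro a b ha hb Ψ hΨ
    refine invar_tensor (ha.tensor hb).EI hcm.mp (fun c d hc hd => ?_) hΨ
    have := h1 a b c d ha hb hc hd
    unfold Lam at this
    simp only [mul_comm (EI _ _ _ _)]
    exact this
  have hΦg : BM (fun z => Φ (Prod.map g g z)) := hΦ.comp hcm.mp.measurable
  have hig : (fun z => Φ (Prod.map g g (Prod.map T T z))) =ᵐ[ρ] fun z => Φ (Prod.map g g z) := by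
    have := hcm.mp.quasiMeasurePreserving.ae_eq_comp hi
    refine EventuallyEq.trans (Eventually.of_forall fun z => ?_) this
    simp only [Function.comp_apply, hcm.comm]
  have h3 : (fun z => Φ (Prod.map g g z) - Φ z) =ᵐ[ρ] 0 := by
    refine total_tensor (hΦg.sub hΦ) fun a b ha hb => ?_
    simp only [sub_mul]
    rw [integral_sub ((hΦg.mul (ha.tensor hb)).integrable _) ((hΦ.mul (ha.tensor hb)).integrable _)]
    have e1 : ∫ z, Φ (Prod.map g g z) * (a z.1 * b z.2) ∂ρ =
        ∫ z, Φ (Prod.map g g z) * EI ρ (Prod.map T T) (fun z => a z.1 * b z.2) z ∂ρ := by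
      have i1 := EI_of_inv hTT hΦg hig
      have i2 := integral_EI_mul (μ := ρ) (T := Prod.map T T) hΦg (ha.tensor hb)
      have j1 : ∫ z, EI ρ (Prod.map T T) (fun z => Φ (Prod.map g g z)) z * (a z.1 * b z.2) ∂ρ =
          ∫ z, Φ (Prod.map g g z) * (a z.1 * b z.2) ∂ρ :=
        integral_congr_ae (by filter_upwards [i1] with z hz; rw [hz])
      have j2 : ∫ z, EI ρ (Prod.map T T) (fun z => Φ (Prod.map g g z)) z *
            EI ρ (Prod.map T T) (fun z => a z.1 * b z.2) z ∂ρ =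
          ∫ z, Φ (Prod.map g g z) * EI ρ (Prod.map T T) (fun z => a z.1 * b z.2) z ∂ρ :=
        integral_congr_ae (by filter_upwards [i1] with z hz; rw [hz])
      rw [← j1, ← j2]; exact i2
    have e2 : ∫ z, Φ z * (a z.1 * b z.2) ∂ρ =
        ∫ z, Φ z * EI ρ (Prod.map T T) (fun z => a z.1 * b z.2) z ∂ρ := by
      have i1 := EI_of_inv hTT hΦ hi
      have i2 := integral_EI_mul (μ := ρ) (T := Prod.map T T) hΦ (ha.tensor hb)
      have j1 : ∫ z, EI ρ (Prod.map T T) Φ z * (a z.1 * b z.2) ∂ρ =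
          ∫ z, Φ z * (a z.1 * b z.2) ∂ρ :=
        integral_congr_ae (by filter_upwards [i1] with z hz; rw [hz])
      have j2 : ∫ z, EI ρ (Prod.map T T) Φ z *
            EI ρ (Prod.map T T) (fun z => a z.1 * b z.2) z ∂ρ =
          ∫ z, Φ z * EI ρ (Prod.map T T) (fun z => a z.1 * b z.2) z ∂ρ :=
        integral_congr_ae (by filter_upwards [i1] with z hz; rw [hz])
      rw [← j1, ← j2]; exact i2
    rw [e1, e2, sub_eq_zero]
    have := h2 a b ha hb Φ hΦ
    simp only [mul_comm (EI _ _ _ _)] at this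
    exact this
  filter_upwards [h3] with z hz
  simpa [sub_eq_zero] using hz

end L3
end HKP

namespace HKP
open ProbabilityTheory
universe u

/-- polynomial degree type condition -/
def Deg {Y Z : Type*} [MeasurableSpace Z] (lift tau : (Y → Y) → Z → Z) (k : ℕ) (G : Z → ℝ) : Prop :=
  ∃ H : ℕ → Z → ℝ, (∀ i, BM (H i)) ∧ ∀ g w, G (tau g w) = ∏ i ∈ range k, H i ((lift g)^[i] w)

lemma Deg.mul {Y Z : Type*} [MeasurableSpace Z] {lift tau : (Y → Y) → Z → Z} {k : ℕ} {G G' : Z → ℝ}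
    (h : Deg lift tau k G) (h' : Deg lift tau k G') : Deg lift tau k (fun w => G w * G' w) := by
  obtain ⟨H, a, b⟩ := h
  obtain ⟨H', a', b'⟩ := h'
  refine ⟨fun i w => H i w * H' i w, fun i => (a i).mul (a' i), fun g w => ?_⟩
  simp only [b, b', prod_mul_distrib]

lemma Deg.one {Y Z : Type*} [MeasurableSpace Z] {lift tau : (Y → Y) → Z → Z} {k : ℕ} :
    Deg lift tau k (fun _ => 1) :=
  ⟨fun _ _ => 1, fun _ => BM.const 1, fun g w => by simp⟩

lemma Deg.pi {Y Z : Type*} {m : MeasurableSpace Z} [MeasurableSpace Z]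
    {lift tau : (Y → Y) → Z → Z} {k : ℕ} :
    IsPiSystem {s : Set Z | MeasurableSet[m] s ∧ Deg lift tau k (s.indicator fun _ => (1:ℝ))} := by
  rintro s ⟨hs, hs'⟩ t ⟨ht, ht'⟩ _
  refine ⟨hs.inter ht, ?_⟩
  convert hs'.mul ht' using 1
  ext w
  by_cases h1 : w ∈ s <;> by_cases h2 : w ∈ t <;> simp [h1, h2]

/-- star automorphisms -/
structure StarAut {Z : Type*} (mstar : MeasurableSpace Z) [ms : MeasurableSpace Z] (ν : Measure Z) (T : Z → Z)
    (σ : Z → Z) : Prop extends CM ν T σ where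
  star : Measurable[mstar, mstar] σ

/-- closed classes of functions -/
structure ClClass {Z : Type*} (mstar : MeasurableSpace Z) [ms : MeasurableSpace Z] (ν : Measure Z) (T : Z → Z)
    (V : Set (Z → ℝ)) : Prop where
  avg : ∀ F : ℕ → Z → ℝ, (∀ n, F n ∈ V) → ∀ N, (fun w => avg N (fun n => F n w)) ∈ V
  lim : ∀ f, BM f → (∀ ε > 0, ∃ v ∈ V, BM v ∧ nrm ν (fun w => f w - v w) < ε) → f ∈ V
  comp : ∀ f ∈ V, ∀ σ, StarAut mstar ν T σ → (fun w => f (σ w)) ∈ V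

/-- Abstract properties of the cube systems -/
structure CubeSys {Y : Type u} [MeasurableSpace Y] (μ : Measure Y) (T : Y → Y) (l : ℕ) where
  Z : Type u
  mstar : MeasurableSpace Z
  [ms : MeasurableSpace Z]
  [sb : StandardBorelSpace Z]
  ν : Measure Z
  [prob : IsProbabilityMeasure ν]
  π : Z → Y
  lift : (Y → Y) → Z → Z
  tau : (Y → Y) → Z → Z
  pw : (Y → ℝ) → Z → ℝ
  mstar_le : mstar ≤ ms
  π_mp : MeasurePreserving π ν μ
  π_lift : ∀ g w, π (lift g w) = g (π w)
  π_tau : ∀ g w, π (tau g w) = g^[l] (π w)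
  lift_id : lift id = id
  lift_comp : ∀ g h, lift (g ∘ h) = lift g ∘ lift h
  tau_comm : ∀ g h : Y → Y, (∀ y, g (h y) = h (g y)) → ∀ w, tau g (lift h w) = lift h (tau g w)
  lift_CM : ∀ g, CM μ T g → CM ν (lift T) (lift g)
  lift_good : ∀ g, Good μ T g → Good ν (lift T) (lift g)
  tau_CM : ∀ g, Good μ T g → CM ν (lift T) (tau g)
  pw_bm : ∀ f, BM f → BM (pw f)
  pw_mul : ∀ f g w, pw (fun y => f y * g y) w = pw f w * pw g w
  pw_comp : ∀ f g w, pw (fun y => f (g y)) w = pw f (lift g w)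
  pw_split : ∀ f, BM f → ∃ G, BM G ∧ Measurable[mstar] G ∧ ∀ w, pw f w = f (π w) * G w
  gen_full : ms = MeasurableSpace.generateFrom
    {s | MeasurableSet s ∧ Deg lift tau (l+1) (s.indicator fun _ => (1:ℝ))}
  gen_star : mstar = MeasurableSpace.generateFrom
    {s | MeasurableSet[mstar] s ∧ Deg lift tau l (s.indicator fun _ => (1:ℝ))}
  proj : ∀ F, BM F → ∃ F0, BM F0 ∧ (∀ f, BM f → ∫ w, f (π w) * F w ∂ν = ∫ y, f y * F0 y ∂μ) ∧
    ∀ V, ClClass mstar ν (lift T) V → F ∈ V → (fun w => F0 (π w)) ∈ V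

attribute [instance] CubeSys.ms CubeSys.sb CubeSys.prob

section
variable {Y : Type u} [mY : MeasurableSpace Y] [StandardBorelSpace Y]
  {μ : Measure Y} [IsProbabilityMeasure μ] {T : Y → Y}

/-- the trivial cube -/
def CubeSys.zero : CubeSys μ T 0 where
  Z := Y
  ν := μ
  π := id
  lift := fun g => g
  tau := fun _ => id
  pw := fun f => f
  mstar := ⊥
  mstar_le := bot_le
  π_mp := MeasurePreserving.id μ
  π_lift := fun _ _ => rfl
  π_tau := fun _ _ => rfl
  lift_id := rfl
  lift_comp := fun _ _ => rfl
  tau_comm := fun _ _ _ _ => rfl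
  lift_CM := fun _ h => h
  lift_good := fun _ h => h
  tau_CM := fun _ _ => CM.id
  pw_bm := fun _ h => h
  pw_mul := fun _ _ _ => rfl
  pw_comp := fun _ _ _ => rfl
  pw_split := fun f _ => ⟨fun _ => 1, BM.const 1, measurable_const, fun w => by simp⟩
  gen_full := by
    apply le_antisymm
    · intro s hs
      refine MeasurableSpace.measurableSet_generateFrom ⟨hs, fun _ => s.indicator fun _ => 1,
        fun _ => BM.indicator hs, fun g w => by simp⟩
    · exact MeasurableSpace.generateFrom_le fun s hs => hs.1
  gen_star := by
    apply le_antisymm bot_le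
    exact MeasurableSpace.generateFrom_le fun s hs => hs.1
  proj := fun F hF => ⟨F, hF, fun _ _ => rfl, fun V _ h => h⟩

lemma Deg.tensor {Y Z : Type*} [MeasurableSpace Z] {lift tau : (Y → Y) → Z → Z} {k : ℕ}
    (hc : ∀ g w, tau g (lift g w) = lift g (tau g w)) {A B : Z → ℝ}
    (hA : Deg lift tau k A) (hB : Deg lift tau (k+1) B) :
    Deg (fun g => Prod.map (lift g) (lift g)) (fun g => Prod.map (lift g ∘ tau g) (tau g)) (k+1)
      (fun p : Z × Z => A p.1 * B p.2) := by
  obtain ⟨H, a, b⟩ := hA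
  obtain ⟨H', a', b'⟩ := hB
  refine ⟨fun i p => (match i with | 0 => 1 | j+1 => H j p.1) * H' i p.2, fun i => ?_, fun g w => ?_⟩
  · refine BM.mul ?_ ((a' i).comp measurable_snd)
    match i with
    | 0 => exact BM.const 1
    | j+1 => exact (a j).comp measurable_fst
  · simp only [Prod.map_fst, Prod.map_snd, Function.comp_apply]
    rw [← hc, b, b', prod_mul_distrib]
    congr 1
    · rw [prod_range_succ' _ k, mul_one]
      simp [Prod.map_iterate]
    · simp [Prod.map_iterate]

lemma Deg.tensor' {Y Z : Type*} [MeasurableSpace Z] {lift tau : (Y → Y) → Z → Z} {k : ℕ}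
    {A : Z → ℝ} (hA : Deg lift tau k A) : Deg lift tau (k+1) A := by
  obtain ⟨H, a, b⟩ := hA
  refine ⟨fun i w => if i < k then H i w else 1, fun i => ?_, fun g w => ?_⟩
  · by_cases h : i < k
    · simpa [h] using a i
    · simpa [h] using BM.const 1
  · rw [b, prod_range_succ]
    simp only [lt_irrefl, if_false, mul_one]
    exact prod_congr rfl fun i hi => by rw [if_pos (mem_range.1 hi)]

/-- relative square of a cube -/
noncomputable def CubeSys.succ (hT : MeasurePreserving T μ μ) {l : ℕ} (c : CubeSys μ T l) :
    CubeSys μ T (l+1) where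
  Z := c.Z × c.Z
  ν := relSq c.ν (c.lift T)
  π := fun p => c.π p.1
  lift := fun g => Prod.map (c.lift g) (c.lift g)
  tau := fun g => Prod.map (c.lift g ∘ c.tau g) (c.tau g)
  pw := fun f p => c.pw f p.1 * c.pw f p.2
  mstar := c.mstar.comap Prod.fst ⊔ c.ms.comap Prod.snd
  mstar_le := sup_le_sup (MeasurableSpace.comap_mono c.mstar_le) le_rfl
  π_mp := c.π_mp.comp mp_fst
  π_lift := fun g w => c.π_lift g w.1
  π_tau := fun g w => by
    simp only [Prod.map_fst, Function.comp_apply, c.π_lift, c.π_tau, Function.iterate_succ_apply']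
  lift_id := by simp [c.lift_id]
  lift_comp := fun g h => by rw [c.lift_comp, Prod.map_comp_map]
  tau_comm := fun g h hc w => by
    have h1 : ∀ w, c.lift g (c.lift h w) = c.lift h (c.lift g w) := fun w => by
      have : g ∘ h = h ∘ g := funext hc
      have := congrArg c.lift this
      rw [c.lift_comp, c.lift_comp] at this
      exact congrFun this w
    simp only [Prod.map_apply', Prod.map_fst, Prod.map_snd, Function.comp_apply, c.tau_comm g h hc, h1]
  lift_CM := fun g hg => (c.lift_CM g hg).prod (c.lift_CM T (good_T hT).toCM).mp
  lift_good := fun g hg => good_sq (c.lift_CM T (good_T hT).toCM).mp (c.lift_good g hg)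
  tau_CM := fun g hg => by
    have hTT := (c.lift_CM T (good_T hT).toCM).mp
    refine ⟨(mp_good_id (c.lift_good g hg)).comp (mp_prodMap hTT (c.tau_CM g hg)), fun p => ?_⟩
    simp only [Prod.map_apply', Prod.map_fst, Prod.map_snd, Function.comp_apply, (c.tau_CM g hg).comm,
      (c.lift_good g hg).comm]
  pw_bm := fun f hf => (c.pw_bm f hf).tensor (c.pw_bm f hf)
  pw_mul := fun f g w => by simp only [c.pw_mul]; ring
  pw_comp := fun f g w => by rw [c.pw_comp f g w.1, c.pw_comp f g w.2]; rfl
  pw_split := fun f hf => by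
    obtain ⟨G, h1, h2, h3⟩ := c.pw_split f hf
    refine ⟨fun p => G p.1 * c.pw f p.2, h1.tensor (c.pw_bm f hf), ?_, fun w => by rw [h3]; ring⟩
    have a1 : Measurable[c.mstar.comap Prod.fst ⊔ c.ms.comap Prod.snd] (fun p : c.Z × c.Z => G p.1) :=
      (h2.comp (comap_measurable (m := c.mstar) Prod.fst)).mono le_sup_left le_rfl
    have a2 : Measurable[c.mstar.comap Prod.fst ⊔ c.ms.comap Prod.snd] (fun p : c.Z × c.Z => c.pw f p.2) :=
      ((c.pw_bm f hf).meas.comp (comap_measurable (m := c.ms) Prod.snd)).mono le_sup_right le_rfl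
    exact Measurable.mul (m := c.mstar.comap Prod.fst ⊔ c.ms.comap Prod.snd) a1 a2
  gen_full := by
    have hc : ∀ g w, c.tau g (c.lift g w) = c.lift g (c.tau g w) :=
      fun g => c.tau_comm g g fun _ => rfl
    apply le_antisymm
    · refine sup_le ?_ ?_
      · conv_lhs => rw [c.gen_full]
        rw [MeasurableSpace.comap_generateFrom]
        refine MeasurableSpace.generateFrom_mono ?_
        rintro _ ⟨s, ⟨hs, hd⟩, rfl⟩
        refine ⟨measurable_fst hs, ?_⟩
        convert Deg.tensor hc hd (Deg.one (k := l+2)) using 1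
        ext p; simp only [Set.indicator, mul_one, one_mul]; rfl
      · conv_lhs => rw [c.gen_full]
        rw [MeasurableSpace.comap_generateFrom]
        refine MeasurableSpace.generateFrom_mono ?_
        rintro _ ⟨s, ⟨hs, hd⟩, rfl⟩
        refine ⟨measurable_snd hs, ?_⟩
        convert Deg.tensor hc (Deg.one (k := l+1)) hd.tensor' using 1
        ext p; simp only [Set.indicator, mul_one, one_mul]; rfl
    · exact MeasurableSpace.generateFrom_le fun s hs => hs.1
  gen_star := by
    have hc : ∀ g w, c.tau g (c.lift g w) = c.lift g (c.tau g w) :=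
      fun g => c.tau_comm g g fun _ => rfl
    apply le_antisymm
    · refine sup_le ?_ ?_
      · conv_lhs => rw [c.gen_star]
        rw [MeasurableSpace.comap_generateFrom]
        refine MeasurableSpace.generateFrom_mono ?_
        rintro _ ⟨s, ⟨hs, hd⟩, rfl⟩
        refine ⟨?_, ?_⟩
        · exact le_sup_left (α := MeasurableSpace (c.Z × c.Z)) _ ⟨s, hs, rfl⟩
        convert Deg.tensor hc hd (Deg.one (k := l+1)) using 1
        ext p; simp only [Set.indicator, mul_one, one_mul]; rfl
      · conv_lhs => rw [c.gen_full]
        rw [MeasurableSpace.comap_generateFrom]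
        refine MeasurableSpace.generateFrom_mono ?_
        rintro _ ⟨s, ⟨hs, hd⟩, rfl⟩
        refine ⟨?_, ?_⟩
        · exact le_sup_right (α := MeasurableSpace (c.Z × c.Z)) _ ⟨s, hs, rfl⟩
        convert Deg.tensor hc (Deg.one (k := l)) hd using 1
        ext p; simp only [Set.indicator, mul_one, one_mul]; rfl
    · exact MeasurableSpace.generateFrom_le fun s hs => hs.1
  proj := fun F hF => by
    have hTT := (c.lift_CM T (good_T hT).toCM).mp
    obtain ⟨F0, h0, h1, h2⟩ := c.proj (RI c.ν (c.lift T) F) hF.RI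
    refine ⟨F0, h0, fun f hf => ?_, fun V hV hFV => ?_⟩
    · rw [← h1 f hf, ← integral_fst_mul (hf.comp c.π_mp.measurable) hF]
    · refine h2 {G | BM G ∧ (fun p : c.Z × c.Z => G p.1) ∈ V} ⟨?_, ?_, ?_⟩ ?_ |>.2
      · intro G hG N
        exact ⟨BM.avg N fun n => (hG n).1, hV.avg (fun n p => G n p.1) (fun n => (hG n).2) N⟩
      · intro G hG h
        refine ⟨hG, hV.lim _ (hG.comp measurable_fst) fun ε hε => ?_⟩
        obtain ⟨v, hv, hv1, hv2⟩ := h ε hε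
        refine ⟨_, hv.2, hv1.comp measurable_fst, ?_⟩
        have := nrm_comp (mp_fst (μ := c.ν) (T := c.lift T)) (hG.sub hv1)
        rw [this]; exact hv2
      · rintro G ⟨hG, hGV⟩ σ hσ
        refine ⟨hG.comp hσ.mp.measurable, ?_⟩
        have := hV.comp _ hGV (Prod.map σ σ) ⟨hσ.toCM.prod hTT, ?_⟩
        · exact this
        · rw [measurable_iff_comap_le, MeasurableSpace.comap_sup, MeasurableSpace.comap_comp,
            MeasurableSpace.comap_comp]
          have e1 : Prod.fst ∘ Prod.map σ σ = σ ∘ Prod.fst := rfl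
          have e2 : Prod.snd ∘ Prod.map σ σ = σ ∘ Prod.snd := rfl
          rw [e1, e2, ← MeasurableSpace.comap_comp, ← MeasurableSpace.comap_comp]
          exact sup_le_sup (MeasurableSpace.comap_mono hσ.star.comap_le)
            (MeasurableSpace.comap_mono hσ.mp.measurable.comap_le)
      · refine ⟨hF.RI, hV.lim _ (hF.RI.comp measurable_fst) fun ε hε => ?_⟩
        have := ((tendsto_order.1 (avg_id_T hTT hF)).2 ε hε).exists
        obtain ⟨N, hN⟩ := this
        have hmp : ∀ n, MeasurePreserving (Prod.map id (c.lift T)^[n])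
            (relSq c.ν (c.lift T)) (relSq c.ν (c.lift T)) := fun n => by
          have := (mp_id_T hTT).iterate n
          rwa [Prod.map_iterate, Function.iterate_id] at this
        refine ⟨fun p => avg N (fun n => F (p.1, (c.lift T)^[n] p.2)), ?_, ?_, ?_⟩
        · refine hV.avg (fun n p => F (p.1, (c.lift T)^[n] p.2)) (fun n => ?_) N
          refine hV.comp F hFV (Prod.map id (c.lift T)^[n]) ⟨⟨hmp n, fun p => ?_⟩, ?_⟩
          · simp only [Prod.map_apply', id, ← Function.iterate_succ_apply, ← Function.iterate_succ_apply']
          · rw [measurable_iff_comap_le, MeasurableSpace.comap_sup, MeasurableSpace.comap_comp,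
              MeasurableSpace.comap_comp]
            have e1 : Prod.fst ∘ Prod.map (id : c.Z → c.Z) (c.lift T)^[n] = Prod.fst := rfl
            have e2 : Prod.snd ∘ Prod.map (id : c.Z → c.Z) (c.lift T)^[n] = (c.lift T)^[n] ∘ Prod.snd := rfl
            rw [e1, e2, ← MeasurableSpace.comap_comp]
            exact sup_le_sup le_rfl
              (MeasurableSpace.comap_mono (hTT.iterate n).measurable.comap_le)
        · exact BM.avg N fun n => hF.comp (hmp n).measurable
        · rw [nrm_sub_comm]; exact hN

/-- The tower of cubes -/
noncomputable def cube (hT : MeasurePreserving T μ μ) : ∀ l, CubeSys μ T l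
  | 0 => CubeSys.zero
  | l+1 => (cube hT l).succ hT

end
end HKP

namespace HKP
open ProbabilityTheory
universe u

lemma sum_inj_le {s : Finset ℕ} {H : ℕ} {b : ℕ → ℝ} (hb : ∀ k, 0 ≤ b k) (e : ℕ → ℕ)
    (he : Set.InjOn e s) (hm : ∀ i ∈ s, e i < H) : ∑ i ∈ s, b (e i) ≤ ∑ k ∈ range H, b k := by
  rw [← sum_image (f := b) he]
  refine sum_le_sum_of_subset_of_nonneg (fun k hk => ?_) fun k _ _ => hb k
  obtain ⟨i, hi, rfl⟩ := Finset.mem_image.1 hk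
  exact mem_range.2 (hm i hi)

lemma avg_dd_le (H : ℕ) {b : ℕ → ℝ} (hb : ∀ k, 0 ≤ b k) :
    avg H (fun h => avg H (fun h' => b ((h - h') + (h' - h)))) ≤ 2 * avg H b := by
  refine avg_le_const' H (mul_nonneg zero_le_two (avg_nonneg H hb)) fun h hh => ?_
  unfold avg
  rw [mul_left_comm]
  refine mul_le_mul_of_nonneg_left ?_ (by positivity)
  rw [← sum_filter_add_sum_filter_not (range H) (fun h' => h' ≤ h), two_mul]
  refine add_le_add ?_ ?_
  · refine sum_inj_le hb (fun h' => (h - h') + (h' - h)) ?_ ?_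
    · intro x hx y hy hxy
      simp only [coe_filter, mem_range, Set.mem_ofPred_eq] at hx hy hxy
      omega
    · intro x hx
      simp only [mem_filter, mem_range] at hx
      omega
  · refine sum_inj_le hb (fun h' => (h - h') + (h' - h)) ?_ ?_
    · intro x hx y hy hxy
      simp only [coe_filter, mem_range, Set.mem_ofPred_eq] at hx hy hxy
      omega
    · intro x hx
      simp only [mem_filter, mem_range] at hx
      omega

lemma avg_mul_le (H : ℕ) {m : ℕ} (hm : 0 < m) {b : ℕ → ℝ} (hb : ∀ k, 0 ≤ b k) :
    avg H (fun k => b (k * m)) ≤ m * avg (H * m) b := by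
  have hm' : (m:ℝ) ≠ 0 := by positivity
  have : (m:ℝ) * avg (H * m) b = (H:ℝ)⁻¹ * ∑ k ∈ range (H * m), b k := by
    unfold avg; push_cast; rw [mul_inv]; field_simp
  rw [this]
  unfold avg
  refine mul_le_mul_of_nonneg_left ?_ (by positivity)
  refine sum_inj_le hb (fun k => k * m) (fun x _ y _ h => Nat.eq_of_mul_eq_mul_right hm h) ?_
  intro i hi
  exact Nat.mul_lt_mul_of_pos_right (mem_range.1 hi) hm

lemma avg_shift {u : ℕ → ℝ} {B : ℝ} (hB : ∀ n, |u n| ≤ B) {N h H : ℕ} (hh : h < H) (hN : 0 < N) :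
    |avg N u - avg N (fun n => u (n + h))| ≤ 2 * H * B / N := by
  have hB0 : 0 ≤ B := (abs_nonneg _).trans (hB 0)
  have e1 : ∑ n ∈ range (N + h), u n = ∑ n ∈ range N, u n + ∑ j ∈ range h, u (N + j) :=
    sum_range_add _ _ _
  have e2 : ∑ n ∈ range (h + N), u n = ∑ n ∈ range h, u n + ∑ j ∈ range N, u (h + j) :=
    sum_range_add _ _ _
  have e3 : avg N u - avg N (fun n => u (n + h)) =
      (N:ℝ)⁻¹ * (∑ n ∈ range h, u n - ∑ j ∈ range h, u (N + j)) := by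
    unfold avg
    rw [← mul_sub]
    congr 1
    rw [add_comm h N] at e2
    simp only [add_comm h] at e2
    linarith
  have b1 : ∀ w : ℕ → ℝ, (∀ n, |w n| ≤ B) → |∑ n ∈ range h, w n| ≤ H * B := fun w hw => by
    refine (abs_sum_le_sum_abs _ _).trans ((sum_le_sum fun i _ => hw i).trans ?_)
    simp only [sum_const, card_range, nsmul_eq_mul]
    have : (h:ℝ) ≤ H := by exact_mod_cast hh.le
    gcongr
  rw [e3, abs_mul, abs_of_nonneg (by positivity : (0:ℝ) ≤ (N:ℝ)⁻¹)]
  have := abs_sub (∑ n ∈ range h, u n) (∑ j ∈ range h, u (N + j))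
  have h1 := b1 u hB
  have h2 := b1 (fun j => u (N + j)) fun _ => hB _
  rw [div_eq_inv_mul]
  refine mul_le_mul_of_nonneg_left ?_ (by positivity)
  linarith

lemma avg_sq_le (N : ℕ) (w : ℕ → ℝ) : avg N w ^ 2 ≤ avg N (fun n => w n ^ 2) := by
  rcases Nat.eq_zero_or_pos N with rfl | hN
  · simp [avg]
  have := sq_sum_le_card_mul_sum_sq (s := range N) (f := w)
  rw [card_range] at this
  unfold avg
  have hN' : (0:ℝ) < N := by exact_mod_cast hN
  rw [mul_pow]
  calc _ ≤ ((N:ℝ)⁻¹)^2 * (N * ∑ i ∈ range N, w i ^ 2) := by gcongr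
    _ = _ := by field_simp

section
variable {Y : Type u} [mY : MeasurableSpace Y]
  {μ : Measure Y} [IsProbabilityMeasure μ] {T : Y → Y}

lemma vdC {v : ℕ → Y → ℝ} (hv : ∀ n, BM (v n)) {B : ℝ} (hB : ∀ n y, |v n y| ≤ B) {N H : ℕ}
    (hN : 0 < N) (hH : 0 < H) {b : ℕ → ℝ} (hb : ∀ k, 0 ≤ b k)
    (hbb : ∀ h k, h + k < H → avg N (fun n => ∫ y, v (n + h) y * v (n + h + k) y ∂μ) ≤ b k) :
    nrm μ (fun y => avg N (fun n => v n y)) ≤ 2 * H * B / N + √(2 * avg H b) := by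
  have hA : BM (fun y => avg N (fun n => v n y)) := BM.avg N hv
  have hw : ∀ n, BM (fun y => avg H (fun h => v (n + h) y)) := fun n => BM.avg H fun h => hv _
  have hW : BM (fun y => avg N (fun n => avg H (fun h => v (n + h) y))) := BM.avg N hw
  have h1 : nrm μ (fun y => avg N (fun n => v n y) - avg N (fun n => avg H (fun h => v (n + h) y)))
      ≤ 2 * H * B / N := by
    refine nrm_le_of_bound fun y => ?_
    have hB0 : 0 ≤ B := (abs_nonneg _).trans (hB 0 y)
    rw [avg_comm N H, ← avg_const hH (avg N fun n => v n y), ← avg_sub]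
    refine (abs_avg_le _ _).trans (avg_le_const' H (by positivity) fun h hh => ?_)
    exact avg_shift (fun n => hB n y) hh hN
  have h2 : nrm μ (fun y => avg N (fun n => avg H (fun h => v (n + h) y))) ≤ √(2 * avg H b) := by
    refine Real.le_sqrt_of_sq_le ?_
    rw [nrm_sq]
    have sqB : ∀ {f : Y → ℝ}, BM f → BM (fun y => f y ^ 2) := fun hf => by
      simpa only [sq] using hf.mul hf
    calc _ ≤ ∫ y, avg N (fun n => avg H (fun h => v (n + h) y) ^ 2) ∂μ :=
          integral_mono ((sqB hW).integrable μ) ((BM.avg N fun n => sqB (hw n)).integrable μ)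
            fun y => avg_sq_le N _
      _ = avg N (fun n => avg H (fun h => avg H (fun h' => ∫ y, v (n + h) y * v (n + h') y ∂μ))) := by
          rw [integral_avg N fun n => sqB (hw n)]
          refine avg_congr _ fun n => ?_
          have : ∀ y, avg H (fun h => v (n + h) y) ^ 2 =
              avg H (fun h => avg H (fun h' => v (n + h) y * v (n + h') y)) := fun y => by
            simp only [avg_mul_left, avg_mul_right, sq]
          simp only [this]
          rw [integral_avg H fun h => BM.avg H fun h' => (hv _).mul (hv _)]
          refine avg_congr _ fun h => ?_
          rw [integral_avg H fun h' => (hv _).mul (hv _)]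
      _ = avg H (fun h => avg H (fun h' => avg N (fun n => ∫ y, v (n + h) y * v (n + h') y ∂μ))) := by
          rw [avg_comm N H]
          refine avg_congr _ fun h => ?_
          rw [avg_comm]
      _ ≤ avg H (fun h => avg H (fun h' => b ((h - h') + (h' - h)))) := by
          unfold avg
          refine mul_le_mul_of_nonneg_left (sum_le_sum fun h hh => ?_) (by positivity)
          refine mul_le_mul_of_nonneg_left (sum_le_sum fun h' hh' => ?_) (by positivity)
          rw [mem_range] at hh hh'
          change avg N _ ≤ _
          rcases le_total h h' with hle | hle
          · obtain ⟨k, rfl⟩ := Nat.exists_eq_add_of_le hle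
            have := hbb h k hh'
            simpa [add_assoc] using this
          · obtain ⟨k, rfl⟩ := Nat.exists_eq_add_of_le hle
            have := hbb h' k hh
            simp only [mul_comm (v (_ + (h' + k)) _)]
            simpa [add_assoc] using this
      _ ≤ _ := avg_dd_le H hb
  have h3 := nrm_add_le (μ := μ) (hA.sub hW) hW
  simp only [sub_add_cancel] at h3
  linarith

end

section
variable {Y : Type u} [mY : MeasurableSpace Y] [StandardBorelSpace Y]
  {μ : Measure Y} [IsProbabilityMeasure μ] {T : Y → Y}

/-- (powers of) seminorms -/
noncomputable def sn (hT : MeasurePreserving T μ μ) (l : ℕ) (f : Y → ℝ) : ℝ :=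
  ∫ w, (cube hT l).pw f w ∂(cube hT l).ν

lemma CubeSys.lift_iter {l : ℕ} (c : CubeSys μ T l) (g : Y → Y) (n : ℕ) :
    c.lift (g^[n]) = (c.lift g)^[n] := by
  induction n with
  | zero => exact c.lift_id
  | succ n ih => rw [Function.iterate_succ, c.lift_comp, ih, Function.iterate_succ]

lemma sn_succ (hT : MeasurePreserving T μ μ) (l : ℕ) {f : Y → ℝ} (hf : BM f) :
    sn hT (l+1) f = ∫ w, (cube hT l).pw f w * EI (cube hT l).ν ((cube hT l).lift T) ((cube hT l).pw f) w
      ∂(cube hT l).ν :=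
  integral_tensor ((cube hT l).pw_bm f hf) ((cube hT l).pw_bm f hf)

lemma sn_nonneg (hT : MeasurePreserving T μ μ) (l : ℕ) {f : Y → ℝ} (hf : BM f) :
    0 ≤ sn hT (l+1) f := by
  rw [sn_succ hT l hf, integral_mul_EI' ((cube hT l).pw_bm f hf) ((cube hT l).pw_bm f hf)]
  exact integral_nonneg fun _ => mul_self_nonneg _

lemma sn_one (hT : MeasurePreserving T μ μ) {f : Y → ℝ} (hf : BM f) :
    sn hT 1 f = nrm μ (EI μ T f) ^ 2 := by
  rw [nrm_sq', ← integral_mul_EI' hf hf]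
  exact sn_succ hT 0 hf

lemma sn_tendsto (hT : MeasurePreserving T μ μ) (l : ℕ) {f : Y → ℝ} (hf : BM f) :
    Tendsto (fun H => avg H (fun h => sn hT l (fun y => f y * f (T^[h] y)))) atTop
      (nhds (sn hT (l+1) f)) := by
  rw [sn_succ hT l hf]
  set c := cube hT l with hc
  refine (avg_integral_tendsto (c.lift_CM T (good_T hT).toCM).mp (c.pw_bm f hf) (c.pw_bm f hf)).congr
    fun N => avg_congr _ fun h => ?_
  unfold sn
  rw [← hc]
  congr 1
  ext w
  rw [c.pw_mul, c.pw_comp f T^[h], c.lift_iter]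

variable (T) in
/-- multiple averages -/
noncomputable def Av (N : ℕ) (g : Y → Y) (l : ℕ) (f : ℕ → Y → ℝ) (y : Y) : ℝ :=
  avg N (fun n => ∏ i ∈ range l, f i ((T^[n] ∘ g)^[i+1] y))

lemma abs_prod_le {l : ℕ} {a : ℕ → ℝ} {C : ℝ} (h : ∀ i, |a i| ≤ C) : |∏ i ∈ range l, a i| ≤ C ^ l := by
  rw [abs_prod]
  exact (prod_le_prod (fun _ _ => abs_nonneg _) (fun i _ => h i)).trans (by simp)

lemma CM.Tn (hT : MeasurePreserving T μ μ) {g : Y → Y} (hg : CM μ T g) (n : ℕ) : CM μ T (T^[n] ∘ g) :=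
  ((good_T hT).toCM.iter n).comp hg

lemma BM.Av (hT : MeasurePreserving T μ μ) {g : Y → Y} (hg : CM μ T g) (N l : ℕ) {f : ℕ → Y → ℝ}
    (hf : ∀ i, BM (f i)) : BM (Av T N g l f) :=
  BM.avg N fun n => BM.prod _ fun i _ => (hf i).comp ((hg.Tn hT n).iter _).mp.measurable

lemma x_le_aux {x ε : ℝ} (hε : 0 < ε) : x ≤ x ^ 2 / ε + ε / 4 := by
  have : (x ^ 2 / ε + ε / 4) - x = (x - ε/2)^2 / ε := by field_simp; ring
  have h2 : 0 ≤ (x - ε/2)^2 / ε := by positivity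
  linarith

theorem claim3 (hT : MeasurePreserving T μ μ) (l : ℕ) : ∀ C > 0, ∀ ε > 0, ∃ M ≥ 0, ∀ f : ℕ → Y → ℝ,
    (∀ i, Measurable (f i)) → (∀ i y, |f i y| ≤ C) → ∃ N0, ∀ N ≥ N0, ∀ g, CM μ T g →
      nrm μ (Av T N g (l+1) f) ≤ ε + M * sn hT (l+1) (f l) := by
  induction l with
  | zero =>
    intro C hC ε hε
    refine ⟨1 / ε, by positivity, fun f hf hfC => ?_⟩
    have hB : BM (f 0) := ⟨hf 0, C, hfC 0⟩
    obtain ⟨N0, hN0⟩ := eventually_atTop.1 ((tendsto_order.1 (mean_ergodic hT hB)).2 (ε/2) (by positivity))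
    refine ⟨N0, fun N hN g hg => ?_⟩
    have hA : BM (fun y => avg N (fun n => f 0 (T^[n] y))) :=
      BM.avg N fun n => hB.comp (hT.iterate n).measurable
    have e : nrm μ (Av T N g (0+1) f) = nrm μ (fun y => avg N (fun n => f 0 (T^[n] y))) := by
      rw [← nrm_comp hg.mp hA]
      unfold Av
      simp
    have h1 := nrm_add_le (μ := μ) (hA.sub (hB.EI (μ := μ) (T := T))) (hB.EI (μ := μ) (T := T))
    simp only [sub_add_cancel] at h1
    have h2 := hN0 N hN
    have h3 := x_le_aux (x := nrm μ (EI μ T (f 0))) hε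
    rw [e, sn_one hT hB, one_div, ← div_eq_inv_mul]
    linarith
  | succ l ih =>
    intro C hC ε hε
    obtain ⟨M, hM, hf1⟩ := ih (C^2) (by positivity) (ε^2 / (8 * C^2)) (by positivity)
    refine ⟨2 * C^2 * M * (l+2) / ε, by positivity, fun f hf hfC => ?_⟩
    have hB : ∀ i, BM (f i) := fun i => ⟨hf i, C, hfC i⟩
    set F := f (l+1) with hF
    set σ : ℕ → ℝ := fun j => sn hT (l+1) (fun y => F y * F (T^[j] y)) with hσ
    have hσ0 : ∀ j, 0 ≤ σ j := fun j =>
      sn_nonneg hT l ((hB _).mul ((hB _).comp (hT.iterate j).measurable))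
    set η : ℝ := ε^2 / (8 * C^2 * (M+1) * (l+2)) with hη
    have hη0 : 0 < η := by positivity
    set s := sn hT (l+1+1) F with hs
    -- choose `H`
    have lim : Tendsto (fun H => avg (H * (l+2)) σ) atTop (nhds s) :=
      (sn_tendsto hT (l+1) (hB (l+1))).comp (tendsto_id.atTop_mul_const' (by omega))
    obtain ⟨H, hH0, hH⟩ := ((eventually_gt_atTop 0).and
      ((tendsto_order.1 lim).2 (s + η) (by linarith))).exists
    -- the differences
    set φ : ℕ → ℕ → Y → ℝ := fun k i y => f i y * f i (T^[k * (i+1)] y) with hφ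
    have hφC : ∀ k i y, |φ k i y| ≤ C^2 := fun k i y => by
      rw [hφ, abs_mul, sq]; exact mul_le_mul (hfC _ _) (hfC _ _) (abs_nonneg _) hC.le
    have hφB : ∀ k i, BM (φ k i) := fun k i => (hB i).mul ((hB i).comp (hT.iterate _).measurable)
    have ch : ∀ k, ∃ N0, ∀ N ≥ N0, ∀ g, CM μ T g →
      nrm μ (Av T N g (l+1) (fun i => φ k (i+1))) ≤ ε^2 / (8 * C^2) + M * σ (k * (l+2)) := fun k =>
      hf1 (fun i => φ k (i+1)) (fun i => (hφB k _).meas) (fun i => hφC k _)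
    choose N1 hN1 using ch
    obtain ⟨N2, hN2⟩ := exists_nat_gt (2 * H * C^(l+2) / (ε/4))
    refine ⟨(∑ k ∈ range H, N1 k) + N2 + 1, fun N hN g hg => ?_⟩
    have hNpos : 0 < N := by omega
    set b : ℕ → ℝ := fun k => C^2 * (ε^2 / (8 * C^2) + M * σ (k * (l+2))) with hb
    have hb0 : ∀ k, 0 ≤ b k := fun k => by
      have := hσ0 (k * (l+2))
      positivity
    set v : ℕ → Y → ℝ := fun n y => ∏ i ∈ range (l+1+1), f i ((T^[n] ∘ g)^[i+1] y) with hv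
    have hvB : ∀ n, BM (v n) := fun n =>
      BM.prod _ fun i _ => (hB i).comp ((hg.Tn hT n).iter _).mp.measurable
    have key := vdC (μ := μ) hvB (B := C^(l+2)) (fun n y => abs_prod_le fun i => hfC i _) hNpos hH0 hb0 ?_
    · have e1 : 2 * (H:ℝ) * C^(l+2) / N ≤ ε/4 := by
        have hN3 : (N2:ℝ) ≤ N := by exact_mod_cast (by omega : N2 ≤ N)
        have : 0 < (N:ℝ) := by exact_mod_cast hNpos
        rw [div_lt_iff₀ (by positivity)] at hN2
        rw [div_le_iff₀ this]
        nlinarith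
      have e2 : avg H b ≤ C^2 * (ε^2 / (8 * C^2) + M * ((l+2) * (s + η))) := by
        rw [hb, avg_mul_left, avg_add, avg_const hH0, avg_mul_left]
        have := avg_mul_le H (m := l+2) (by omega) hσ0
        push_cast at this
        have h4 : avg H (fun k => σ (k * (l+2))) ≤ (l+2) * (s + η) :=
          this.trans (mul_le_mul_of_nonneg_left hH.le (by positivity))
        gcongr
      have e3 := x_le_aux (x := √(2 * avg H b)) hε
      rw [Real.sq_sqrt (mul_nonneg zero_le_two (avg_nonneg H hb0))] at e3
      have e4 : 2 * avg H b / ε ≤ 2 * (C^2 * (ε^2 / (8 * C^2) + M * ((l+2) * (s + η)))) / ε := by gcongr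
      have e5 : 2 * (C^2 * (ε^2 / (8 * C^2) + M * ((l+2) * (s + η)))) / ε =
          ε/4 + 2 * C^2 * M * (l+2) / ε * s + (M / (M+1)) * (ε/4) := by
        rw [hη]; field_simp; ring
      have e6 : (M / (M+1)) * (ε/4) ≤ ε/4 := by
        have : M / (M+1) ≤ 1 := by rw [div_le_one (by linarith)]; linarith
        nlinarith
      change nrm μ (fun y => avg N (fun n => v n y)) ≤ _
      linarith
    · intro h k hk
      have hkH : k < H := by omega
      have hNk : N ≥ N1 k := by
        have := single_le_sum (f := N1) (fun _ _ => Nat.zero_le _) (mem_range.2 hkH)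
        omega
      set g' := T^[h] ∘ g with hg'
      have hg'c : CM μ T g' := hg.Tn hT h
      have h1 := hN1 k N hNk g' hg'c
      have hAvB := BM.Av hT hg'c N (l+1) (f := fun i => φ k (i+1)) (fun i => hφB k _)
      have e1 : ∀ n, ∫ y, v (n + h) y * v (n + h + k) y ∂μ =
          ∫ y, φ k 0 y * ∏ i ∈ range (l+1), φ k (i+1) ((T^[n] ∘ g')^[i+1] y) ∂μ := by
        intro n
        set γ := T^[n] ∘ g' with hγ
        have hγc : CM μ T γ := hg'c.Tn hT n
        have γ1 : T^[n+h] ∘ g = γ := by rw [Function.iterate_add]; rfl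
        have γ2 : T^[n+h+k] ∘ g = T^[k] ∘ γ := by
          rw [add_comm _ k, Function.iterate_add, Function.comp_assoc, γ1]
        have hcm : Function.Commute T^[k] γ := by
          have : Function.Commute γ T := hγc.comm
          exact (this.iterate_right k).symm
        have e2 : ∀ y, v (n + h) y * v (n + h + k) y = (fun y => φ k 0 y *
            ∏ i ∈ range (l+1), φ k (i+1) (γ^[i+1] y)) (γ y) := by
          intro y
          simp only [hv, γ1, γ2]
          rw [← prod_mul_distrib]
          have : ∀ i, f i (γ^[i+1] y) * f i ((T^[k] ∘ γ)^[i+1] y) = φ k i (γ^[i+1] y) := by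
            intro i
            rw [hcm.comp_iterate, Function.comp_apply, ← Function.iterate_mul]
          simp only [this]
          rw [prod_range_succ', mul_comm]
          rfl
        simp only [e2]
        exact integral_comp_mp hγc.mp ((hφB k 0).mul
          (BM.prod _ fun i _ => (hφB k _).comp (hγc.iter _).mp.measurable))
      have e3 : avg N (fun n => ∫ y, v (n + h) y * v (n + h + k) y ∂μ) =
          ∫ y, φ k 0 y * Av T N g' (l+1) (fun i => φ k (i+1)) y ∂μ := by
        simp only [e1]
        rw [← integral_avg N (F := fun n y => φ k 0 y * ∏ i ∈ range (l+1), φ k (i+1) ((T^[n] ∘ g')^[i+1] y))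
          fun n => (hφB k 0).mul (BM.prod _ fun i _ => (hφB k _).comp ((hg'c.Tn hT n).iter _).mp.measurable)]
        simp only [avg_mul_left]
        rfl
      rw [e3]
      refine (le_abs_self _).trans ((abs_integral_mul_le (hφB k 0) hAvB).trans ?_)
      exact mul_le_mul (nrm_le_of_bound (hφC k 0)) h1 nrm_nonneg (by positivity)

end
end HKP

namespace HKP
open ProbabilityTheory
universe u

lemma exists_condExp_BM {Z : Type*} {m : MeasurableSpace Z} [m0 : MeasurableSpace Z] {ν : Measure Z}
    [IsProbabilityMeasure ν] (hm : m ≤ m0) {f : Z → ℝ} (hf : BM f) :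
    ∃ K, BM K ∧ Measurable[m] K ∧ ∀ v, BM v → Measurable[m] v → ∫ w, v w * K w ∂ν = ∫ w, v w * f w ∂ν := by
  obtain ⟨C, hC0, hC⟩ := hf.bdd'
  have h1 : Measurable[m] (ν[f|m]) := stronglyMeasurable_condExp.measurable
  have h2 : ∀ᵐ w ∂ν, |(ν[f|m]) w| ≤ C :=
    ae_bdd_abs_condExp_of_ae_bdd_abs (Eventually.of_forall hC)
  have h3 : Measurable[m] (fun w => max (-C) (min C ((ν[f|m]) w))) := by
    have : Measurable (fun x : ℝ => max (-C) (min C x)) := by fun_prop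
    exact this.comp h1
  have h4 : (fun w => max (-C) (min C ((ν[f|m]) w))) =ᵐ[ν] ν[f|m] := by
    filter_upwards [h2] with w hw
    rw [abs_le] at hw
    rw [min_eq_right hw.2, max_eq_right hw.1]
  refine ⟨_, ⟨h3.mono hm le_rfl, C, fun w => ?_⟩, h3, fun v hv hvm => ?_⟩
  · rw [abs_le]
    exact ⟨le_max_left _ _, max_le (by linarith) (min_le_left _ _)⟩
  · have e1 : ∫ w, v w * max (-C) (min C ((ν[f|m]) w)) ∂ν = ∫ w, v w * (ν[f|m]) w ∂ν := by
      apply integral_congr_ae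
      filter_upwards [h4] with w hw
      rw [hw]
    rw [e1]
    have e2 := condExp_mul_of_stronglyMeasurable_left (μ := ν) (m := m) (f := v) (g := f)
      hvm.stronglyMeasurable ((hv.mul hf).integrable ν) (hf.integrable ν)
    have e3 := integral_condExp (μ := ν) hm (f := v * f)
    have e4 := integral_congr_ae e2
    rw [e3] at e4
    exact e4.symm

section
variable {Y : Type u} [mY : MeasurableSpace Y] [StandardBorelSpace Y]
  {μ : Measure Y} [IsProbabilityMeasure μ] {T : Y → Y}

/-- star measurable functions -/
def CubeSys.VS {l : ℕ} (c : CubeSys μ T l) : Set (c.Z → ℝ) := {v | BM v ∧ Measurable[c.mstar] v}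

lemma CubeSys.VS_lin {l : ℕ} (c : CubeSys μ T l) : LinClass c.VS where
  bm := fun v hv => hv.1
  add := fun v hv w hw => ⟨hv.1.add hw.1, Measurable.add (m := c.mstar) hv.2 hw.2⟩
  smul := fun a v hv => ⟨(BM.const a).mul hv.1, Measurable.const_mul (m := c.mstar) hv.2 a⟩
  one := ⟨BM.const 1, measurable_const⟩

lemma CubeSys.VS_cl {l : ℕ} (c : CubeSys μ T l) :
    ClClass c.mstar c.ν (c.lift T) {F | BM F ∧ Appr c.ν c.VS F} where
  avg := fun F hF N => ⟨BM.avg N fun n => (hF n).1,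
    (Appr.sum c.VS_lin (range N) (fun i _ => (hF i).1) (fun i _ => (hF i).2)).smul c.VS_lin _⟩
  lim := fun f hf h => ⟨hf, Appr.of_lim c.VS_lin hf fun ε hε => by
    obtain ⟨v, hv, hv1, hv2⟩ := h ε hε
    exact ⟨v, hv1, hv.2, hv2⟩⟩
  comp := fun f hf σ hσ => ⟨hf.1.comp hσ.mp.measurable, fun ε hε => by
    obtain ⟨v, hv, hv2⟩ := hf.2 ε hε
    refine ⟨fun w => v (σ w), ⟨hv.1.comp hσ.mp.measurable, hv.2.comp hσ.star⟩, ?_⟩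
    have := nrm_comp hσ.mp (hf.1.sub hv.1)
    rw [this]; exact hv2⟩

lemma CubeSys.struct {l : ℕ} (c : CubeSys μ T l) {f : Y → ℝ} (hf : BM f) :
    ∃ d, BM d ∧ Appr c.ν c.VS (fun w => d (c.π w)) ∧ ∫ w, c.pw (fun y => f y - d y) w ∂c.ν = 0 := by
  have hfπ : BM (fun w => f (c.π w)) := hf.comp c.π_mp.measurable
  obtain ⟨K, hK, hKm, hKi⟩ := exists_condExp_BM (ν := c.ν) c.mstar_le hfπ
  obtain ⟨d, hd, hd1, hd2⟩ := c.proj K hK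
  have hdπ : BM (fun w => d (c.π w)) := hd.comp c.π_mp.measurable
  have hA : Appr c.ν c.VS (fun w => d (c.π w)) :=
    (hd2 _ c.VS_cl ⟨hK, Appr.of_mem ⟨hK, hKm⟩⟩).2
  refine ⟨d, hd, hA, ?_⟩
  have i1 : ∫ w, d (c.π w) * K w ∂c.ν = ∫ w, d (c.π w) * f (c.π w) ∂c.ν := by
    have h1 : ∀ ε > 0, |∫ w, d (c.π w) * (K w - f (c.π w)) ∂c.ν| ≤ ε * nrm c.ν (fun w => K w - f (c.π w)) := by
      intro ε hε
      obtain ⟨v, hv, hv2⟩ := hA ε hε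
      have h3 := abs_integral_mul_sub_le (μ := c.ν) hdπ hv.1 (hK.sub hfπ)
      have h4 : ∫ w, v w * (K w - f (c.π w)) ∂c.ν = 0 := by
        simp only [mul_sub]
        rw [integral_sub ((hv.1.mul hK).integrable _) ((hv.1.mul hfπ).integrable _), hKi v hv.1 hv.2, sub_self]
      rw [h4, sub_zero] at h3
      exact h3.trans (mul_le_mul_of_nonneg_right hv2.le nrm_nonneg)
    have h2 : |∫ w, d (c.π w) * (K w - f (c.π w)) ∂c.ν| ≤ 0 := by
      refine le_of_forall_pos_le_add fun ε hε => ?_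
      rw [zero_add]
      set q := nrm c.ν (fun w => K w - f (c.π w)) with hq
      have hq0 : 0 ≤ q := nrm_nonneg
      refine (h1 (ε / (q + 1)) (by positivity)).trans ?_
      rw [div_mul_eq_mul_div, div_le_iff₀ (by positivity)]
      nlinarith
    have h3 := abs_nonpos_iff.1 h2
    simp only [mul_sub] at h3
    rw [integral_sub ((hdπ.mul hK).integrable _) ((hdπ.mul hfπ).integrable _)] at h3
    linarith
  have i2 : ∫ w, d (c.π w) * K w ∂c.ν = ∫ y, d y * d y ∂μ := hd1 d hd
  have i2' : ∫ w, d (c.π w) * d (c.π w) ∂c.ν = ∫ y, d y * d y ∂μ := integral_comp_mp c.π_mp (hd.mul hd)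
  have i3 : ∫ w, d (c.π w) * f (c.π w) ∂c.ν = ∫ y, d y * f y ∂μ := integral_comp_mp c.π_mp (hd.mul hf)
  have i4 : ∫ w, f (c.π w) * K w ∂c.ν = ∫ y, f y * d y ∂μ := hd1 f hf
  have i5 : ∫ w, K w * K w ∂c.ν = ∫ w, K w * f (c.π w) ∂c.ν := hKi K hK hKm
  have i6 : nrm c.ν (fun w => K w - d (c.π w)) = 0 := by
    rw [← sq_eq_zero_iff, nrm_sq]
    have e : ∀ w, (K w - d (c.π w))^2 = (K w * K w - d (c.π w) * K w) - (d (c.π w) * K w - d (c.π w) * d (c.π w)) :=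
      fun w => by ring
    simp only [e]
    rw [integral_sub (((hK.mul hK).sub (hdπ.mul hK)).integrable _)
      (((hdπ.mul hK).sub (hdπ.mul hdπ)).integrable _),
      integral_sub ((hK.mul hK).integrable _) ((hdπ.mul hK).integrable _),
      integral_sub ((hdπ.mul hK).integrable _) ((hdπ.mul hdπ).integrable _)]
    simp only [mul_comm (K _) (f _)] at i5
    simp only [mul_comm (f _) (d _)] at i4
    linarith
  have i7 := ae_eq_of_nrm hK hdπ i6
  obtain ⟨G, hG, hGm, hGp⟩ := c.pw_split _ (hf.sub hd)
  have e1 : ∫ w, c.pw (fun y => f y - d y) w ∂c.ν = ∫ w, G w * f (c.π w) - G w * K w ∂c.ν := by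
    apply integral_congr_ae
    filter_upwards [i7] with w hw
    rw [hGp, hw]; ring
  rw [e1, integral_sub ((hG.mul hfπ).integrable _) ((hG.mul hK).integrable _), hKi G hG hGm, sub_self]

end
end HKP

namespace HKP
open ProbabilityTheory
universe u

section
variable {Y : Type u} [mY : MeasurableSpace Y] [StandardBorelSpace Y]
  {μ : Measure Y} [IsProbabilityMeasure μ] {T : Y → Y}

/-- lifted averages -/
noncomputable def CubeSys.W {k : ℕ} (c : CubeSys μ T k) (l : ℕ) (F : ℕ → Y → ℝ) (N : ℕ) (g : Y → Y)
    (v : c.Z → ℝ) (w : c.Z) : ℝ :=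
  avg N (fun n => (∏ i ∈ range l, F i ((T^[n] ∘ g)^[i+1] (c.π w))) * v (c.tau (T^[n] ∘ g) w))

lemma Good.Tn (hT : MeasurePreserving T μ μ) {g : Y → Y} (hg : Good μ T g) (n : ℕ) :
    Good μ T (T^[n] ∘ g) := ((good_T hT).iter n).comp hg

lemma CubeSys.W_bm1 {k : ℕ} (c : CubeSys μ T k) (hT : MeasurePreserving T μ μ) (l : ℕ) {F : ℕ → Y → ℝ}
    (hF : ∀ i, BM (F i)) {g : Y → Y} (hg : Good μ T g) {v : c.Z → ℝ} (hv : BM v) (n : ℕ) :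
    BM (fun w => (∏ i ∈ range l, F i ((T^[n] ∘ g)^[i+1] (c.π w))) * v (c.tau (T^[n] ∘ g) w)) := by
  refine BM.mul (BM.prod _ fun i _ => ?_) (hv.comp (c.tau_CM _ (hg.Tn hT n)).mp.measurable)
  exact (hF i).comp ((((hg.Tn hT n).toCM.iter (i+1)).mp.measurable).comp c.π_mp.measurable)

lemma CubeSys.W_bm {k : ℕ} (c : CubeSys μ T k) (hT : MeasurePreserving T μ μ) (l : ℕ) {F : ℕ → Y → ℝ}
    (hF : ∀ i, BM (F i)) (N : ℕ) {g : Y → Y} (hg : Good μ T g) {v : c.Z → ℝ} (hv : BM v) :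
    BM (c.W l F N g v) := BM.avg N fun n => c.W_bm1 hT l hF hg hv n

lemma CubeSys.W_lip {k : ℕ} (c : CubeSys μ T k) (hT : MeasurePreserving T μ μ) (l : ℕ) {F : ℕ → Y → ℝ}
    (hF : ∀ i, BM (F i)) {C : ℝ} (hC0 : 0 < C) (hC : ∀ i y, |F i y| ≤ C) (N : ℕ) {g : Y → Y}
    (hg : Good μ T g) {v v' : c.Z → ℝ} (hv : BM v) (hv' : BM v') :
    nrm c.ν (fun w => c.W l F N g v w - c.W l F N g v' w) ≤ C ^ l * nrm c.ν (fun w => v w - v' w) := by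
  have e : (fun w => c.W l F N g v w - c.W l F N g v' w) = fun w => avg N (fun n =>
      (∏ i ∈ range l, F i ((T^[n] ∘ g)^[i+1] (c.π w))) * (fun z => v z - v' z) (c.tau (T^[n] ∘ g) w)) := by
    funext w
    simp only [CubeSys.W, mul_sub, avg_sub]
  rw [e]
  refine (nrm_avg_le N fun n => c.W_bm1 hT l hF hg (hv.sub hv') n).trans ?_
  refine avg_le_const N (mul_nonneg (by positivity) nrm_nonneg) fun n => ?_
  have hm := (c.tau_CM _ (hg.Tn hT n)).mp
  refine (nrm_mul_le ((hv.sub hv').comp hm.measurable) (C := C ^ l) fun w => abs_prod_le fun i => hC _ _).trans ?_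
  have hfin := nrm_comp hm (hv.sub hv')
  exact le_of_eq (congrArg (fun t => C ^ l * t) hfin)

/-- functions with uniformly Cauchy lifted averages -/
def CubeSys.VW {k : ℕ} (c : CubeSys μ T k) (l : ℕ) (F : ℕ → Y → ℝ) : Set (c.Z → ℝ) :=
  {v | BM v ∧ ∀ ε > 0, ∃ N0, ∀ N ≥ N0, ∀ N' ≥ N0, ∀ g g', Good μ T g → Good μ T g' →
    nrm c.ν (fun w => c.W l F N g v w - c.W l F N' g' v w) < ε}

/-- the inductive property -/
def QProp (l : ℕ) : Prop := ∀ {Y : Type u} [MeasurableSpace Y] [StandardBorelSpace Y] (μ : Measure Y)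
  [IsProbabilityMeasure μ] (T : Y → Y) (_ : MeasurePreserving T μ μ) (f : ℕ → Y → ℝ) (_ : ∀ i, BM (f i)),
  ∀ ε > 0, ∃ N0, ∀ N ≥ N0, ∀ N' ≥ N0, ∀ g g', Good μ T g → Good μ T g' →
    nrm μ (fun y => Av T N g l f y - Av T N' g' l f y) < ε

lemma CubeSys.W_deg {l : ℕ} (c : CubeSys μ T (l+1)) {F : ℕ → Y → ℝ} {v : c.Z → ℝ} {H : ℕ → c.Z → ℝ}
    (hH : ∀ g w, v (c.tau g w) = ∏ i ∈ range (l+1), H i ((c.lift g)^[i] w)) (N : ℕ) (g : Y → Y) (w : c.Z) :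
    c.W l F N g v w =
      H 0 w * Av (c.lift T) N (c.lift g) l (fun i w => F i (c.π w) * H (i+1) w) w := by
  unfold CubeSys.W Av
  rw [← avg_mul_left]
  refine avg_congr N fun n => ?_
  rw [hH, prod_range_succ', prod_mul_distrib]
  have e1 : (c.lift T)^[n] ∘ c.lift g = c.lift (T^[n] ∘ g) := by rw [c.lift_comp, c.lift_iter]
  have e2 : ∀ i, c.π ((c.lift (T^[n] ∘ g))^[i] w) = (T^[n] ∘ g)^[i] (c.π w) := fun i =>
    (Function.Semiconj.iterate_right (f := c.π) (ga := c.lift (T^[n] ∘ g)) (gb := T^[n] ∘ g)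
      (fun z => c.π_lift _ z) i) w
  rw [e1]
  simp only [e2, Function.iterate_zero, id]
  ring

lemma CubeSys.VW_lin {l : ℕ} (c : CubeSys μ T (l+1)) (hT : MeasurePreserving T μ μ) {F : ℕ → Y → ℝ}
    (hF : ∀ i, BM (F i)) (hone : (fun _ => (1:ℝ)) ∈ c.VW l F) : LinClass (c.VW l F) where
  bm := fun v hv => hv.1
  one := hone
  add := fun v hv v' hv' => ⟨hv.1.add hv'.1, fun ε hε => by
    obtain ⟨N1, h1⟩ := hv.2 (ε/2) (by positivity)
    obtain ⟨N2, h2⟩ := hv'.2 (ε/2) (by positivity)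
    refine ⟨max N1 N2, fun N hN N' hN' g g' hg hg' => ?_⟩
    have a1 := h1 N (le_of_max_le_left hN) N' (le_of_max_le_left hN') g g' hg hg'
    have a2 := h2 N (le_of_max_le_right hN) N' (le_of_max_le_right hN') g g' hg hg'
    have e : (fun w => c.W l F N g (fun x => v x + v' x) w - c.W l F N' g' (fun x => v x + v' x) w) =
        fun w => (c.W l F N g v w - c.W l F N' g' v w) + (c.W l F N g v' w - c.W l F N' g' v' w) := by
      funext w
      simp only [CubeSys.W, mul_add, avg_add]
      ring
    rw [e]
    refine (nrm_add_le ((c.W_bm hT l hF N hg hv.1).sub (c.W_bm hT l hF N' hg' hv.1))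
      ((c.W_bm hT l hF N hg hv'.1).sub (c.W_bm hT l hF N' hg' hv'.1))).trans_lt ?_
    linarith⟩
  smul := fun a v hv => ⟨(BM.const a).mul hv.1, fun ε hε => by
    obtain ⟨N1, h1⟩ := hv.2 (ε/(|a|+1)) (by positivity)
    refine ⟨N1, fun N hN N' hN' g g' hg hg' => ?_⟩
    have a1 := h1 N hN N' hN' g g' hg hg'
    have e : (fun w => c.W l F N g (fun x => a * v x) w - c.W l F N' g' (fun x => a * v x) w) =
        fun w => a * (c.W l F N g v w - c.W l F N' g' v w) := by
      funext w
      simp only [CubeSys.W, mul_left_comm _ a, avg_mul_left]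
      ring
    rw [e, nrm_smul]
    rw [lt_div_iff₀ (by positivity)] at a1
    have := nrm_nonneg (μ := c.ν) (f := fun w => c.W l F N g v w - c.W l F N' g' v w)
    nlinarith⟩

lemma CubeSys.VW_deg {l : ℕ} (hQ : QProp.{u} l) (c : CubeSys μ T (l+1)) (hT : MeasurePreserving T μ μ)
    {F : ℕ → Y → ℝ} (hF : ∀ i, BM (F i)) {v : c.Z → ℝ} (hv : BM v) (hd : Deg c.lift c.tau (l+1) v) :
    v ∈ c.VW l F := by
  obtain ⟨H, hH, hH2⟩ := hd
  obtain ⟨C, hC0, hC⟩ := (hH 0).bdd'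
  have hTh := (c.lift_good T (good_T hT))
  have hbm : ∀ i, BM (fun w => F i (c.π w) * H (i+1) w) := fun i =>
    ((hF i).comp c.π_mp.measurable).mul (hH _)
  refine ⟨hv, fun ε hε => ?_⟩
  obtain ⟨N0, hN0⟩ := hQ c.ν (c.lift T) hTh.mp (fun i w => F i (c.π w) * H (i+1) w) hbm
    (ε / C) (by positivity)
  refine ⟨N0, fun N hN N' hN' g g' hg hg' => ?_⟩
  have h1 := hN0 N hN N' hN' _ _ (c.lift_good g hg) (c.lift_good g' hg')
  simp only [c.W_deg hH2, ← mul_sub]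
  refine (nrm_mul_le ((BM.Av hTh.mp (c.lift_good g hg).toCM N l hbm).sub
    (BM.Av hTh.mp (c.lift_good g' hg').toCM N' l hbm)) hC).trans_lt ?_
  rw [lt_div_iff₀ hC0] at h1
  linarith

lemma CubeSys.VW_dense {l : ℕ} (hQ : QProp.{u} l) (c : CubeSys μ T (l+1)) (hT : MeasurePreserving T μ μ)
    {F : ℕ → Y → ℝ} (hF : ∀ i, BM (F i)) {v : c.Z → ℝ} (hv : BM v) (ha : Appr c.ν c.VS v) :
    Appr c.ν (c.VW l F) v := by
  have hlin : LinClass (c.VW l F) := c.VW_lin hT hF (c.VW_deg hQ hT hF (BM.const 1) Deg.one)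
  refine Appr.of_lim hlin hv fun ε hε => ?_
  obtain ⟨v', hv', h2⟩ := ha ε hε
  refine ⟨v', hv'.1, ?_, h2⟩
  exact dense_of_pi hlin c.mstar_le c.gen_star Deg.pi
    (fun s hs => c.VW_deg hQ hT hF (BM.indicator (c.mstar_le s hs.1)) hs.2) hv'.1 hv'.2

lemma CubeSys.VW_closed {l : ℕ} (c : CubeSys μ T (l+1)) (hT : MeasurePreserving T μ μ)
    {F : ℕ → Y → ℝ} (hF : ∀ i, BM (F i)) {C : ℝ} (hC0 : 0 < C) (hC : ∀ i y, |F i y| ≤ C)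
    {v : c.Z → ℝ} (hv : BM v) (ha : Appr c.ν (c.VW l F) v) : v ∈ c.VW l F := by
  refine ⟨hv, fun ε hε => ?_⟩
  obtain ⟨v', hv', h2⟩ := ha (ε / (3 * C ^ l)) (by positivity)
  obtain ⟨N0, hN0⟩ := hv'.2 (ε / 3) (by positivity)
  refine ⟨N0, fun N hN N' hN' g g' hg hg' => ?_⟩
  have b := c.W_lip hT l hF hC0 hC N hg hv hv'.1
  have b' := c.W_lip hT l hF hC0 hC N' hg' hv'.1 hv
  rw [nrm_sub_comm (f := v')] at b'
  have h3 : C ^ l * nrm c.ν (fun w => v w - v' w) < ε / 3 := by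
    rw [lt_div_iff₀ (by positivity)] at h2
    linarith
  have h1 := hN0 N hN N' hN' g g' hg hg'
  have t1 := nrm_tri (μ := c.ν) (c.W_bm hT l hF N hg hv) (c.W_bm hT l hF N hg hv'.1) (c.W_bm hT l hF N' hg' hv)
  have t2 := nrm_tri (μ := c.ν) (c.W_bm hT l hF N hg hv'.1) (c.W_bm hT l hF N' hg' hv'.1) (c.W_bm hT l hF N' hg' hv)
  linarith

/-- replace the last function -/
def sq (f : ℕ → Y → ℝ) (l : ℕ) (e : Y → ℝ) (i : ℕ) : Y → ℝ := if i < l then f i else e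

lemma Av_sq (f : ℕ → Y → ℝ) (l : ℕ) (e : Y → ℝ) (N : ℕ) (g : Y → Y) (y : Y) :
    Av T N g (l+1) (sq f l e) y =
      avg N (fun n => (∏ i ∈ range l, f i ((T^[n] ∘ g)^[i+1] y)) * e ((T^[n] ∘ g)^[l+1] y)) := by
  unfold Av
  refine avg_congr N fun n => ?_
  rw [prod_range_succ]
  congr 1
  · refine prod_congr rfl fun i hi => ?_
    simp [sq, mem_range.1 hi]
  · simp [sq]

lemma BM.sq {f : ℕ → Y → ℝ} (hf : ∀ i, BM (f i)) (l : ℕ) {e : Y → ℝ} (he : BM e) (i : ℕ) :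
    BM (HKP.sq f l e i) := by
  unfold HKP.sq; split_ifs
  exacts [hf i, he]

lemma Av_congr {f f' : ℕ → Y → ℝ} {l : ℕ} (h : ∀ i < l, f i = f' i) (N : ℕ) (g : Y → Y) :
    Av T N g l f = Av T N g l f' := by
  funext y
  unfold Av
  refine avg_congr N fun n => prod_congr rfl fun i hi => ?_
  rw [h i (mem_range.1 hi)]

lemma W_pi {l : ℕ} (c : CubeSys μ T (l+1)) (f : ℕ → Y → ℝ) (N : ℕ) (g : Y → Y) (d : Y → ℝ) (w : c.Z) :
    c.W l f N g (fun z => d (c.π z)) w = Av T N g (l+1) (sq f l d) (c.π w) := by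
  rw [Av_sq]
  unfold CubeSys.W
  simp only [c.π_tau]

lemma exists_bound {f : ℕ → Y → ℝ} (hf : ∀ i, BM (f i)) (l : ℕ) :
    ∃ C > 0, ∀ i < l, ∀ y, |f i y| ≤ C := by
  induction l with
  | zero => exact ⟨1, one_pos, fun i hi => by omega⟩
  | succ l ih =>
    obtain ⟨C, hC0, hC⟩ := ih
    obtain ⟨D, hD0, hD⟩ := (hf l).bdd'
    refine ⟨max C D, lt_max_of_lt_left hC0, fun i hi y => ?_⟩
    rcases Nat.lt_succ_iff_lt_or_eq.1 hi with h | rfl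
    · exact (hC i h y).trans (le_max_left _ _)
    · exact (hD y).trans (le_max_right _ _)
end

theorem QProp_all (l : ℕ) : QProp.{u} l := by
  induction l with
  | zero =>
    intro Y _ _ μ _ T hT f hf ε hε
    refine ⟨1, fun N hN N' hN' g g' _ _ => ?_⟩
    simp only [Av, prod_range_zero, avg_const (show 0 < N by omega), avg_const (show 0 < N' by omega),
      sub_self, nrm_zero]
    exact hε
  | succ l ih =>
    intro Y _ _ μ _ T hT f0 hf0 ε hε
    -- truncated sequence
    obtain ⟨C0, hC00, hC0⟩ := exists_bound hf0 (l+1)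
    let f : ℕ → Y → ℝ := fun i => if i < l + 1 then f0 i else fun _ => 0
    have hf : ∀ i, BM (f i) := fun i => by
      dsimp only [f]; split_ifs
      exacts [hf0 i, BM.const 0]
    have hfC : ∀ i y, |f i y| ≤ C0 := fun i y => by
      dsimp only [f]; split_ifs with h
      exacts [hC0 i h y, by simpa using hC00.le]
    have hff : ∀ i < l + 1, f0 i = f i := fun i hi => (if_pos hi).symm
    simp only [Av_congr (T := T) hff]
    set c := cube hT (l+1) with hc
    obtain ⟨d, hd, hdA, hd0⟩ := c.struct (hf l)
    have hu : BM (fun y => f l y - d y) := (hf l).sub hd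
    obtain ⟨D, hD0, hD⟩ := hu.bdd'
    have hsq : ∀ i, BM (sq f l (fun y => f l y - d y) i) := BM.sq hf l hu
    obtain ⟨M, hM0, hM⟩ := claim3 hT l (max C0 D) (lt_max_of_lt_left hC00) (ε / 8) (by positivity)
    obtain ⟨N1, hN1⟩ := hM (sq f l (fun y => f l y - d y)) (fun i => (hsq i).meas) (fun i y => by
      unfold sq; split_ifs
      · exact (hfC i y).trans (le_max_left _ _)
      · exact (hD y).trans (le_max_right _ _))
    have hsn : sn hT (l+1) (sq f l (fun y => f l y - d y) l) = 0 := by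
      have : sq f l (fun y => f l y - d y) l = fun y => f l y - d y := by simp [sq]
      rw [this]; exact hd0
    rw [hsn] at hN1
    have hdπ : BM (fun w => d (c.π w)) := hd.comp c.π_mp.measurable
    have hV := c.VW_closed hT hf hC00 hfC hdπ (c.VW_dense ih hT hf hdπ hdA)
    obtain ⟨N2, hN2⟩ := hV.2 (ε/2) (by positivity)
    refine ⟨max N1 N2, fun N hN N' hN' g g' hg hg' => ?_⟩
    have a1 := hN1 N (le_of_max_le_left hN) g hg.toCM
    have a1' := hN1 N' (le_of_max_le_left hN') g' hg'.toCM
    have a2 := hN2 N (le_of_max_le_right hN) N' (le_of_max_le_right hN') g g' hg hg'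
    have hsd : ∀ i, BM (sq f l d i) := BM.sq hf l hd
    simp only [W_pi] at a2
    rw [nrm_comp c.π_mp ((BM.Av hT hg.toCM N (l+1) hsd).sub (BM.Av hT hg'.toCM N' (l+1) hsd))] at a2
    have e : ∀ N g y, Av T N g (l+1) f y = Av T N g (l+1) (sq f l (fun y => f l y - d y)) y
        + Av T N g (l+1) (sq f l d) y := by
      intro N g y
      have : Av T N g (l+1) f y = Av T N g (l+1) (sq f l (f l)) y := by
        rw [Av_congr (f' := sq f l (f l))]
        intro i hi
        unfold sq
        split_ifs with h
        · rfl
        · congr 1; omega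
      rw [this, Av_sq, Av_sq, Av_sq, ← avg_add]
      refine avg_congr N fun n => ?_
      ring
    have e2 : (fun y => Av T N g (l+1) f y - Av T N' g' (l+1) f y) =
      fun y => (Av T N g (l+1) (sq f l (fun y => f l y - d y)) y -
        Av T N' g' (l+1) (sq f l (fun y => f l y - d y)) y) +
        (Av T N g (l+1) (sq f l d) y - Av T N' g' (l+1) (sq f l d) y) := by
      funext y
      rw [e, e]; ring
    rw [e2]
    have b1 := nrm_add_le (μ := μ) ((BM.Av hT hg.toCM N (l+1) hsq).sub (BM.Av hT hg'.toCM N' (l+1) hsq))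
      ((BM.Av hT hg.toCM N (l+1) hsd).sub (BM.Av hT hg'.toCM N' (l+1) hsd))
    have b2 := nrm_sub_le (μ := μ) (BM.Av hT hg.toCM N (l+1) hsq) (BM.Av hT hg'.toCM N' (l+1) hsq)
    linarith

end HKP

namespace HKP
open ProbabilityTheory
universe u

section
variable {Y : Type u} [mY : MeasurableSpace Y] [StandardBorelSpace Y]
  {μ : Measure Y} [IsProbabilityMeasure μ] {T S : Y → Y}

lemma Av_avg_close (hT : MeasurePreserving T μ μ) {l : ℕ} {f : ℕ → Y → ℝ} (hf : ∀ i, BM (f i)) {ε : ℝ}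
    (hε : 0 < ε) {N M : ℕ} (hM : 0 < M) {g : ℕ → Y → Y} (hg : ∀ m, Good μ T (g m))
    (h : ∀ m, nrm μ (fun y => Av T N id l f y - Av T N (g m) l f y) < ε) :
    nrm μ (fun y => Av T N id l f y - avg M (fun m => Av T N (g m) l f y)) ≤ ε := by
  have e : (fun y => Av T N id l f y - avg M (fun m => Av T N (g m) l f y)) =
      fun y => avg M (fun m => Av T N id l f y - Av T N (g m) l f y) := by
    funext y
    rw [avg_sub, avg_const hM]
  rw [e]
  refine (nrm_avg_le M fun m => (BM.Av hT CM.id N l hf).sub (BM.Av hT (hg m).toCM N l hf)).trans ?_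
  exact avg_le_const M hε.le fun m => (h m).le

theorem model (hTe : Ergodic T μ) (hSe : Ergodic S μ) (hc : ∀ y, T (S y) = S (T y)) (l : ℕ)
    {f : ℕ → Y → ℝ} (hf : ∀ i, BM (f i)) : ∀ ε > 0, ∃ N0, ∀ N ≥ N0, ∀ M ≥ N0,
      nrm μ (fun y => Av T N id l f y - Av S M id l f y) < ε := by
  intro ε hε
  have hT := hTe.toMeasurePreserving
  have hS := hSe.toMeasurePreserving
  have hcm : Function.Commute T S := hc
  have gT : ∀ n, Good μ S (T^[n]) := fun n => Good.of_ergodic hSe ⟨hT.iterate n, fun y => (hcm.iterate_left n) y⟩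
  have gS : ∀ n, Good μ T (S^[n]) := fun n => Good.of_ergodic hTe ⟨hS.iterate n, fun y => (hcm.symm.iterate_left n) y⟩
  have iT : Good μ T id := gS 0
  have iS : Good μ S id := gT 0
  obtain ⟨N1, h1⟩ := QProp_all l μ T hT f hf (ε/4) (by positivity)
  obtain ⟨N2, h2⟩ := QProp_all l μ S hS f hf (ε/4) (by positivity)
  refine ⟨max 1 (max N1 N2), fun N hN M hM => ?_⟩
  simp only [ge_iff_le, max_le_iff] at hN hM
  have a1 := Av_avg_close (M := M) hT hf (show 0 < ε/4 by positivity) (by omega) gS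
    fun m => h1 N hN.2.1 N hN.2.1 id _ iT (gS m)
  have a2 := Av_avg_close (M := N) hS hf (show 0 < ε/4 by positivity) (by omega) gT
    fun m => h2 M hM.2.2 M hM.2.2 id _ iS (gT m)
  have e : ∀ y, avg M (fun m => Av T N (S^[m]) l f y) = avg N (fun m => Av S M (T^[m]) l f y) := by
    intro y
    unfold Av
    rw [avg_comm]
    have : ∀ n m, T^[n] ∘ S^[m] = S^[m] ∘ T^[n] := fun n m => funext fun y => (hcm.iterate_iterate n m) y
    simp only [this]
  simp only [e] at a1
  rw [nrm_sub_comm] at a2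
  have t := nrm_tri (μ := μ) (BM.Av hT iT.toCM N l hf) (BM.avg N fun m => BM.Av hS (gT m).toCM M l hf)
    (BM.Av hS iS.toCM M l hf)
  linarith
end

section
variable {X : Type u} [MeasurableSpace X] {μ : Measure X} [IsProbabilityMeasure μ] {T S : X → X} {l : ℕ}

/-- averages on the original system -/
noncomputable def AX (T : X → X) (f : Fin l → X → ℝ) (N : ℕ) (x : X) : ℝ :=
  (N : ℝ)⁻¹ * ∑ n ∈ Finset.range N, ∏ i : Fin l, f i (T^[(i.1 + 1) * n] x)

lemma AX_bm (hT : Measurable T) {f : Fin l → X → ℝ} (hf : ∀ i, BM (f i)) (N : ℕ) : BM (AX T f N) :=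
  BM.avg N fun n => BM.prod _ fun i _ => (hf i).comp (hT.iterate _)

/-- the factor map -/
def fac (T S : X → X) (f : Fin l → X → ℝ) (x : X) (p : Fin l × ℕ × ℕ) : ℝ := f p.1 (T^[p.2.1] (S^[p.2.2] x))

/-- shift one -/
def sh1 (w : Fin l × ℕ × ℕ → ℝ) (p : Fin l × ℕ × ℕ) : ℝ := w (p.1, p.2.1 + 1, p.2.2)

/-- shift two -/
def sh2 (w : Fin l × ℕ × ℕ → ℝ) (p : Fin l × ℕ × ℕ) : ℝ := w (p.1, p.2.1, p.2.2 + 1)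

lemma AX_eq_Av {Ω : Type*} {R : Ω → Ω} {π : X → Ω} (hπ : ∀ x, π (T x) = R (π x)) {f : Fin l → X → ℝ}
    {fh : ℕ → Ω → ℝ} (hfh : ∀ (i : Fin l) x, fh i (π x) = f i x) (N : ℕ) (x : X) :
    AX T f N x = Av R N id l fh (π x) := by
  unfold AX Av avg
  congr 1
  refine sum_congr rfl fun n _ => ?_
  dsimp only
  rw [← Fin.prod_univ_eq_prod_range (fun i => fh i ((R^[n] ∘ id)^[i+1] (π x)))]
  refine prod_congr rfl fun i _ => ?_
  have h : Function.Semiconj π T R := hπ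
  rw [Function.comp_id, ← Function.iterate_mul, ← (h.iterate_right _) x, hfh, mul_comm]

theorem main_nrm (hTe : Ergodic T μ) (hSe : Ergodic S μ) (hc : ∀ y, T (S y) = S (T y))
    {f : Fin l → X → ℝ} (hf : ∀ i, BM (f i)) : ∀ ε > 0, ∃ N0, ∀ N ≥ N0, ∀ M ≥ N0,
      nrm μ (fun x => AX T f N x - AX S f M x) < ε := by
  have hTm := hTe.measurable
  have hSm := hSe.measurable
  have hcm : Function.Commute T S := hc
  have hπm : Measurable (fac T S f) := by
    refine measurable_pi_lambda _ fun p => ?_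
    exact (hf p.1).meas.comp ((hTm.iterate _).comp (hSm.iterate _))
  have h1m : Measurable (sh1 (l := l)) := measurable_pi_lambda _ fun p => measurable_pi_apply _
  have h2m : Measurable (sh2 (l := l)) := measurable_pi_lambda _ fun p => measurable_pi_apply _
  have hπ : MeasurePreserving (fac T S f) μ (μ.map (fac T S f)) := hπm.measurePreserving μ
  have : IsProbabilityMeasure (μ.map (fac T S f)) := Measure.isProbabilityMeasure_map hπm.aemeasurable
  have c1 : ∀ x, fac T S f (T x) = sh1 (fac T S f x) := by
    intro x; funext p
    unfold fac sh1
    dsimp only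
    rw [Function.iterate_succ_apply]
    congr 2
    exact ((hcm.symm.iterate_left _) x)
  have c2 : ∀ x, fac T S f (S x) = sh2 (fac T S f x) := by
    intro x; funext p
    unfold fac sh2
    dsimp only
    rw [Function.iterate_succ_apply]
  have e1 : Ergodic sh1 (μ.map (fac T S f)) := hπ.ergodic_of_ergodic_semiconj hTe h1m c1
  have e2 : Ergodic sh2 (μ.map (fac T S f)) := hπ.ergodic_of_ergodic_semiconj hSe h2m c2
  choose C hC0 hC using fun i => (hf i).bdd'
  let fh : ℕ → (Fin l × ℕ × ℕ → ℝ) → ℝ := fun i w =>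
    if h : i < l then max (-(C ⟨i, h⟩)) (min (C ⟨i, h⟩) (w (⟨i, h⟩, 0, 0))) else 0
  have hfh : ∀ i, BM (fh i) := by
    intro i
    dsimp only [fh]
    by_cases h : i < l
    · simp only [h, dite_true]
      refine ⟨by fun_prop, C ⟨i, h⟩, fun w => ?_⟩
      rw [abs_le]
      exact ⟨le_max_left _ _, max_le (by linarith [hC0 ⟨i, h⟩]) (min_le_left _ _)⟩
    · simp only [h, dite_false]
      exact BM.const 0
  have hfπ : ∀ (i : Fin l) x, fh i (fac T S f x) = f i x := by
    intro i x
    have := hC i x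
    rw [abs_le] at this
    simp only [fh, i.2, dite_true, fac, Function.iterate_zero, id]
    rw [min_eq_right this.2, max_eq_right this.1]
  intro ε hε
  obtain ⟨N0, hN0⟩ := model e1 e2 (fun _ => rfl) l hfh ε hε
  refine ⟨N0, fun N hN M hM => ?_⟩
  simp only [AX_eq_Av c1 hfπ, AX_eq_Av c2 hfπ]
  rw [nrm_comp hπ ((BM.Av e1.toMeasurePreserving CM.id N l hfh).sub (BM.Av e2.toMeasurePreserving CM.id M l hfh))]
  exact hN0 N hN M hM

theorem main_lim {a b : ℕ → X → ℝ} (ha : ∀ n, BM (a n)) (hb : ∀ n, BM (b n))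
    (h : ∀ ε > 0, ∃ N0, ∀ N ≥ N0, ∀ M ≥ N0, nrm μ (fun x => a N x - b M x) < ε) :
    ∃ F : X → ℝ, Measurable F ∧ Tendsto (fun N => eLpNorm (fun x => a N x - F x) 2 μ) atTop (nhds 0) ∧
      Tendsto (fun N => eLpNorm (fun x => b N x - F x) 2 μ) atTop (nhds 0) := by
  have hma := fun n => (ha n).memLp μ 2
  have hmb := fun n => (hb n).memLp μ 2
  have hd : ∀ N M, dist ((hma N).toLp (a N)) ((hmb M).toLp (b M)) = nrm μ (fun x => a N x - b M x) := by
    intro N M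
    rw [dist_eq_norm, ← MemLp.toLp_sub, nrm_eq_norm (((ha N).sub (hb M)).memLp μ 2)]
    rfl
  have hcau : CauchySeq (fun n => (hma n).toLp (a n)) := by
    rw [Metric.cauchySeq_iff]
    intro ε hε
    obtain ⟨N0, hN0⟩ := h (ε/2) (by positivity)
    refine ⟨N0, fun m hm n hn => ?_⟩
    have h1 := hN0 m hm N0 le_rfl
    have h2 := hN0 n hn N0 le_rfl
    rw [← hd] at h1 h2
    have := dist_triangle_right ((hma m).toLp (a m)) ((hma n).toLp (a n)) ((hmb N0).toLp (b N0))
    linarith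
  obtain ⟨F, hF⟩ := cauchySeq_tendsto_of_complete hcau
  have hF2 : Tendsto (fun n => (hmb n).toLp (b n)) atTop (nhds F) := by
    rw [Metric.tendsto_atTop] at hF ⊢
    intro ε hε
    obtain ⟨N0, hN0⟩ := h (ε/2) (by positivity)
    obtain ⟨N1, hN1⟩ := hF (ε/2) (by positivity)
    refine ⟨max N0 N1, fun n hn => ?_⟩
    have h1 := hN0 n (le_of_max_le_left hn) n (le_of_max_le_left hn)
    rw [← hd] at h1
    have h2 := hN1 n (le_of_max_le_right hn)
    have := dist_triangle_left ((hmb n).toLp (b n)) F ((hma n).toLp (a n))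
    linarith
  have hFe : (Lp.memLp F).toLp (F : X → ℝ) = F := Lp.toLp_coeFn F (Lp.memLp F)
  refine ⟨F, (Lp.stronglyMeasurable F).measurable, ?_, ?_⟩
  · rw [← hFe] at hF
    exact (Lp.tendsto_Lp_iff_tendsto_eLpNorm'' a hma F (Lp.memLp F)).1 hF
  · rw [← hFe] at hF2
    exact (Lp.tendsto_Lp_iff_tendsto_eLpNorm'' b hmb F (Lp.memLp F)).1 hF2
end
end HKP

/-- For commuting invertible ergodic `T` and `S` on a probability space, the linear multiple
ergodic averages `(1/N) ∑_{n<N} f₁(Tⁿx)⋯f_l(T^{ln}x)` and the corresponding averages for `S`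
have the same `L²(μ)` limit. -/
theorem limits_of_averages_eq_of_commuting {X : Type*} [MeasurableSpace X]
    (μ : Measure X) [IsProbabilityMeasure μ]
    (T S T' S' : X → X) (hT' : Measurable T') (hS' : Measurable S')
    (hTinv : Function.LeftInverse T' T ∧ Function.RightInverse T' T)
    (hSinv : Function.LeftInverse S' S ∧ Function.RightInverse S' S)
    (hcomm : T ∘ S = S ∘ T)
    (hergT : Ergodic T μ) (hergS : Ergodic S μ)
    (l : ℕ) (hl : 1 ≤ l)
    (f : Fin l → X → ℝ) (hf : ∀ i, Measurable (f i)) (hbd : ∀ i, ∃ C, ∀ x, |f i x| ≤ C) :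
    ∃ F : X → ℝ, Measurable F ∧
      Filter.Tendsto
        (fun N : ℕ => eLpNorm
          (fun x => ((N : ℝ)⁻¹ * ∑ n ∈ Finset.range N,
            ∏ i : Fin l, f i (T^[(i.1 + 1) * n] x)) - F x) 2 μ)
        Filter.atTop (nhds 0) ∧
      Filter.Tendsto
        (fun N : ℕ => eLpNorm
          (fun x => ((N : ℝ)⁻¹ * ∑ n ∈ Finset.range N,
            ∏ i : Fin l, f i (S^[(i.1 + 1) * n] x)) - F x) 2 μ)
        Filter.atTop (nhds 0) := by
  have hb : ∀ i, HKP.BM (f i) := fun i => ⟨hf i, hbd i⟩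
  exact HKP.main_lim (HKP.AX_bm hergT.measurable hb) (HKP.AX_bm hergS.measurable hb)
    (HKP.main_nrm hergT hergS (fun y => congrFun hcomm y) hb)
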